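/- arXiv:2510.03476 — 3 statements merged into one kernel-verified Lean document; each statement's English description precedes it below -/
import Mathlib

section
/- Let F be a p-adic field (a finite extension of ℚ_p) with ring of integers O_F, let E be a cubic étale F-algebra, let O_E be the integral closure of O_F in E, and let i : E → M₃(F) be an injective F-algebra homomorphism such that i(x) ∈ M₃(O_F) for every x ∈ O_E. If g ∈ GL₃(F) satisfies g⁻¹ · i(x) · g ∈ M₃(O_F) for every x ∈ O_E, then there exist u ∈ E^× and k ∈ GL₃(O_F) such that g = i(u) · k. -/
/-!
The vector space `V = F³` is a module over `E` through `i`. Since `E` is a finite product of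
fields and `i` is injective, `V` has a vector `v` with trivial annihilator (add up one nonzero
vector from each block), and `dim E = dim V` makes `c ↦ i c v` a bijection `E ≃ V`.

Let `R` be the ring of elements of `E` integral over `ℤ_[p]`. Under this bijection the `R`-stable
lattices `O_F³` and `g O_F³` become finitely generated `R`-submodules of `E`. Every such submodule
is principal: on each residue field `E ⧸ m` the spectral norm over `ℚ_[p]` is multiplicative and its
unit ball consists of the integral elements, so of two elements one is an integral multiple of the
other (`padic_integral_or_inv`), and the choices made at the various `m` are glued along the
idempotents of `E` (`bezout`).

If `z₀` and `z₁` generate the two lattices, they are units of `E`, because the lattices span `V`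
over `F` (`exists_generator`). With `u = z₁ z₀⁻¹` one gets `g O_F³ = i(u) O_F³`, hence
`i(u)⁻¹ g ∈ GL₃(O_F)`.

A subtle point is that `integralClosure (integralClosure ℤ_[p] F) E` in the theorem refers to the
given structure map `O_F → E`, whereas the scalar tower instance there elaborates to the action of
`O_F` on `E` restricted from `F`. So the structure map is an arbitrary ring homomorphism `O_F → E`.
The two notions of integrality nevertheless agree, since a ring homomorphism from `ℤ_[p]` to a
finite extension of `ℚ_[p]` is automatically the canonical one (`padic_ringHom_unique`): elements of
`1 + p ℤ_[p]` have `n`-th roots for all `n` prime to `p`, so their images have norm one in the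
discretely valued target, which makes the homomorphism continuous.
-/

namespace CubicLattice

/-! ### Integral elements in finite extensions of `ℚ_[p]` -/

/-- An element of a reduced Artinian ring is integral if its images in all residue fields are. -/
lemma isIntegral_of_quotients {A E : Type*} [CommRing A] [CommRing E] [Algebra A E]
    [IsArtinianRing E] [IsReduced E] (x : E)
    (h : ∀ m : MaximalSpectrum E, IsIntegral A (Ideal.Quotient.mk m.asIdeal x)) :
    IsIntegral A x := by
  classical
  have : Fintype (MaximalSpectrum E) := Fintype.ofFinite _
  choose P hP hPx using h
  refine ⟨∏ m, P m, Polynomial.monic_prod_of_monic _ _ fun m _ => hP m, ?_⟩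
  apply (IsArtinianRing.equivPi E).injective
  funext m
  rw [map_zero, IsArtinianRing.equivPi_apply, Pi.zero_apply]
  change Ideal.Quotient.mk m.asIdeal _ = 0
  rw [Polynomial.hom_eval₂, Polynomial.eval₂_finsetProd]
  exact Finset.prod_eq_zero (Finset.mem_univ m) (hPx m)

/-- Integral elements of a finite extension of `ℚ_[p]` form a valuation ring: integrality is
equivalent to having spectral norm at most one. -/
lemma padic_integral_or_inv (p : ℕ) [Fact p.Prime] {K : Type*} [Field K] [Algebra ℚ_[p] K]
    [FiniteDimensional ℚ_[p] K] [Algebra ℤ_[p] K] [IsScalarTower ℤ_[p] ℚ_[p] K] (z : K) :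
    IsIntegral ℤ_[p] z ∨ IsIntegral ℤ_[p] z⁻¹ := by
  have key : ∀ w : K, spectralNorm ℚ_[p] K w ≤ 1 → IsIntegral ℤ_[p] w := by
    intro w hw
    have hint : IsIntegral ℚ_[p] w := Algebra.IsIntegral.isIntegral w
    have hm := minpoly.monic hint
    have hc := (spectralValue_le_one_iff hm).1 hw
    have hl : minpoly ℚ_[p] w ∈ Polynomial.lifts (algebraMap ℤ_[p] ℚ_[p]) := by
      rw [Polynomial.lifts_iff_coeff_lifts]
      intro n
      exact ⟨⟨_, hc n⟩, rfl⟩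
    obtain ⟨q, hq, -, hqm⟩ := Polynomial.lifts_and_natDegree_eq_and_monic hl hm
    refine ⟨q, hqm, ?_⟩
    rw [IsScalarTower.algebraMap_eq ℤ_[p] ℚ_[p] K, ← Polynomial.eval₂_map, hq]
    exact minpoly.aeval _ _
  have hmul := map_mul (spectralMulAlgNorm ℚ_[p] K) z z⁻¹
  by_cases hz : z = 0
  · left; rw [hz]; exact isIntegral_zero
  rw [mul_inv_cancel₀ hz, map_one] at hmul
  simp only [spectralMulAlgNorm_def] at hmul
  by_cases h1 : spectralNorm ℚ_[p] K z ≤ 1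
  · exact Or.inl (key _ h1)
  · right
    apply key
    have h0 := spectralNorm_nonneg (K := ℚ_[p]) (z⁻¹)
    nlinarith

/-! ### Automatic continuity of ring homomorphisms from `ℤ_[p]` -/

/-- A consequence of Hensel's lemma. -/
lemma exists_root (p : ℕ) [Fact p.Prime] (x : ℤ_[p]) (n : ℕ) (hn : p.Coprime n) :
    ∃ w : ℤ_[p], w ^ n = 1 + p * x := by
  have h1 : ‖(n : ℤ_[p])‖ = 1 := PadicInt.norm_natCast_eq_one_iff.2 hn
  have h2 : ‖(p : ℤ_[p]) * x‖ < 1 := (PadicInt.norm_lt_one_iff_dvd _).2 (dvd_mul_right _ _)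
  obtain ⟨z, hz, -⟩ := hensels_lemma (p := p) (R := ℤ_[p])
    (F := Polynomial.X ^ n - Polynomial.C (1 + p * x)) (a := 1) (by
      simpa [h1, Polynomial.derivative_X_pow] using h2)
  refine ⟨z, ?_⟩
  simpa [sub_eq_zero] using hz

/-- The spectral norm on a finite extension of `ℚ_[p]` is discretely valued: a fixed power of it
takes values in `p ^ ℤ`. -/
lemma spectralNorm_pow_mem (p : ℕ) [Fact p.Prime] {K : Type*} [Field K] [Algebra ℚ_[p] K]
    [FiniteDimensional ℚ_[p] K] (z : K) (hz : z ≠ 0) :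
    ∃ b : ℤ, spectralNorm ℚ_[p] K z ^ (Module.finrank ℚ_[p] K).factorial = (p : ℝ) ^ b := by
  have hint : IsIntegral ℚ_[p] z := Algebra.IsIntegral.isIntegral z
  have hc : (minpoly ℚ_[p] z).coeff 0 ≠ 0 := minpoly.coeff_zero_ne_zero hint hz
  have hd0 : 0 < (minpoly ℚ_[p] z).natDegree := minpoly.natDegree_pos hint
  obtain ⟨k, hk⟩ : (minpoly ℚ_[p] z).natDegree ∣ (Module.finrank ℚ_[p] K).factorial :=
    Nat.dvd_factorial hd0 (minpoly.natDegree_le z)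
  refine ⟨-((minpoly ℚ_[p] z).coeff 0).valuation * k, ?_⟩
  rw [hk, pow_mul, spectralNorm.spectralNorm_eq_norm_coeff_zero_rpow, one_div,
    Real.rpow_inv_natCast_pow (norm_nonneg _) hd0.ne', Padic.norm_eq_zpow_neg_valuation hc,
    zpow_mul, zpow_natCast]

/-- The image of `1 + p x` has roots of all orders prime to `p`, which forces its norm to be one
because the norm is discretely valued. -/
lemma spectralNorm_one_add (p : ℕ) [Fact p.Prime] {K : Type*} [Field K] [Algebra ℚ_[p] K]
    [FiniteDimensional ℚ_[p] K] (f : ℤ_[p] →+* K) (x : ℤ_[p]) :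
    spectralNorm ℚ_[p] K (f (1 + p * x)) = 1 := by
  have hp : 1 < (p : ℝ) := by exact_mod_cast (Fact.out : p.Prime).one_lt
  have hu : IsUnit (1 + (p : ℤ_[p]) * x) := by
    by_contra h
    have h1 : (p : ℤ_[p]) ∣ 1 + p * x :=
      (PadicInt.norm_lt_one_iff_dvd _).1 (PadicInt.not_isUnit_iff.1 h)
    have h2 : (p : ℤ_[p]) ∣ 1 := (dvd_add_left (dvd_mul_right _ _)).1 h1
    exact PadicInt.prime_p.not_isUnit (isUnit_of_dvd_one h2)
  have hz : f (1 + p * x) ≠ 0 := (hu.map f).ne_zero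
  obtain ⟨b, hb⟩ := spectralNorm_pow_mem p _ hz
  have hb0 : b = 0 := by
    set n := p * b.natAbs + 1 with hn
    have hco : p.Coprime n := by simp [hn]
    obtain ⟨w, hw⟩ := exists_root p x n hco
    have hw0 : f w ≠ 0 := by
      intro h
      apply hz
      rw [← hw, map_pow, h, zero_pow (by omega)]
    obtain ⟨c, hc⟩ := spectralNorm_pow_mem p _ hw0
    have hmul : spectralNorm ℚ_[p] K (f (1 + p * x)) = spectralNorm ℚ_[p] K (f w) ^ n := by
      rw [← hw, map_pow]
      exact map_pow (spectralMulAlgNorm ℚ_[p] K) (f w) n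
    rw [hmul, pow_right_comm, hc, ← zpow_natCast, ← zpow_mul] at hb
    have hbc : c * n = b := (zpow_right_injective₀ (by linarith) hp.ne') hb
    refine Int.eq_zero_of_abs_lt_dvd (m := (n : ℤ)) ⟨c, by rw [← hbc, mul_comm]⟩ ?_
    rw [Int.abs_eq_natAbs]
    have : b.natAbs ≤ p * b.natAbs := Nat.le_mul_of_pos_left _ (Fact.out : p.Prime).pos
    omega
  rw [hb0, zpow_zero] at hb
  exact (pow_eq_one_iff_of_nonneg (spectralNorm_nonneg _) (Nat.factorial_ne_zero _)).1 hb

/-- Ring homomorphisms from `ℤ_[p]` to a finite extension of `ℚ_[p]` are automatically continuous,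
hence equal to the structure map. -/
lemma padic_ringHom_unique (p : ℕ) [Fact p.Prime] {K : Type*} [Field K] [Algebra ℚ_[p] K]
    [FiniteDimensional ℚ_[p] K] (f : ℤ_[p] →+* K) (x : ℤ_[p]) :
    f x = algebraMap ℚ_[p] K x := by
  have hp : 1 < (p : ℝ) := by exact_mod_cast (Fact.out : p.Prime).one_lt
  let N := spectralMulAlgNorm ℚ_[p] K
  have hNK : ∀ t : ℚ_[p], N (algebraMap ℚ_[p] K t) = ‖t‖ := fun t => spectralNorm_extends t
  have hNp : N (p : K) = (p : ℝ)⁻¹ := by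
    rw [← map_natCast (algebraMap ℚ_[p] K), hNK, Padic.norm_p]
  have hbound : ∀ y : ℤ_[p], N (f y - algebraMap ℚ_[p] K y) ≤ 2 * p + 1 := by
    intro y
    have h1 : N (f (1 + p * y)) = 1 := spectralNorm_one_add p f y
    have h2 : N (p * f y) ≤ 2 := by
      have : (p : K) * f y = f (1 + p * y) - 1 := by simp
      rw [this]
      refine (map_sub_le_add N _ _).trans ?_
      rw [h1, map_one]
      norm_num
    rw [map_mul, hNp, inv_mul_le_iff₀ (by linarith)] at h2
    refine (map_sub_le_add N _ _).trans ?_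
    rw [hNK]
    have := PadicInt.norm_le_one y
    rw [PadicInt.norm_def] at this
    linarith
  have hsmall : ∀ n : ℕ, N (f x - algebraMap ℚ_[p] K x) ≤ ((p : ℝ)⁻¹) ^ n * (2 * p + 1) := by
    intro n
    obtain ⟨y, hy⟩ := Ideal.mem_span_singleton.1 (PadicInt.appr_spec n x)
    have hx : x = (x.appr n : ℤ_[p]) + p ^ n * y := by rw [← hy]; ring
    have : f x - algebraMap ℚ_[p] K x = (p : K) ^ n * (f y - algebraMap ℚ_[p] K y) := by
      generalize x.appr n = q at hx
      rw [hx]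
      push_cast
      simp only [map_add, map_mul, map_pow, map_natCast]
      ring
    rw [this, map_mul, map_pow, hNp]
    exact mul_le_mul_of_nonneg_left (hbound y) (by positivity)
  have hlim : Filter.Tendsto (fun n : ℕ => ((p : ℝ)⁻¹) ^ n * (2 * p + 1)) Filter.atTop
      (nhds (0 * (2 * p + 1))) :=
    (tendsto_pow_atTop_nhds_zero_of_lt_one (by positivity) (inv_lt_one_of_one_lt₀ hp)).mul_const _
  rw [zero_mul] at hlim
  have h0 : N (f x - algebraMap ℚ_[p] K x) ≤ 0 := ge_of_tendsto' hlim hsmall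
  exact sub_eq_zero.1 (eq_zero_of_map_eq_zero N (le_antisymm h0 (apply_nonneg N _)))

lemma ext_quotients {E : Type*} [CommRing E] [IsArtinianRing E] [IsReduced E] {x y : E}
    (h : ∀ m : MaximalSpectrum E, Ideal.Quotient.mk m.asIdeal x = Ideal.Quotient.mk m.asIdeal y) :
    x = y := by
  apply (IsArtinianRing.equivPi E).injective
  funext m
  rw [IsArtinianRing.equivPi_apply, IsArtinianRing.equivPi_apply]
  exact h m

/-- Automatic continuity for ring homomorphisms from `ℤ_[p]` to an étale `ℚ_[p]`-algebra. -/
lemma padic_ringHom_unique_etale (p : ℕ) [Fact p.Prime] {E : Type*} [CommRing E] [IsReduced E]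
    [Algebra ℚ_[p] E] [Module.Finite ℚ_[p] E] [IsArtinianRing E] (f : ℤ_[p] →+* E) (x : ℤ_[p]) :
    f x = algebraMap ℚ_[p] E x := by
  apply ext_quotients
  intro m
  have := m.isMaximal
  let := Ideal.Quotient.field m.asIdeal
  exact padic_ringHom_unique p ((Ideal.Quotient.mk m.asIdeal).comp f) x

lemma isIntegralElem_of_comp {A B E : Type*} [CommRing A] [CommRing B] [CommRing E]
    (g : A →+* B) (f : B →+* E) {x : E} (h : (f.comp g).IsIntegralElem x) :
    f.IsIntegralElem x := by
  obtain ⟨q, hq, hx⟩ := h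
  exact ⟨q.map g, hq.map g, by rw [Polynomial.eval₂_map, hx]⟩

/-! ### Finitely generated submodules of `E` are principal -/

/-- In a reduced Artinian ring whose residue fields have valuation rings as rings of integral
elements, two elements generate a principal submodule over the ring of integral elements. -/
lemma bezout {A E : Type*} [CommRing A] [CommRing E] [Algebra A E]
    [IsArtinianRing E] [IsReduced E]
    (hval : ∀ (m : MaximalSpectrum E) (x y : E ⧸ m.asIdeal), ∃ a, IsIntegral A a ∧
      (x = a * y ∨ y = a * x)) (x y : E) :
    ∃ z a b c d : E, IsIntegral A a ∧ IsIntegral A b ∧ IsIntegral A c ∧ IsIntegral A d ∧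
      z = a * x + b * y ∧ x = c * z ∧ y = d * z := by
  classical
  have hq : ∀ m : MaximalSpectrum E, ∃ a b c d : E ⧸ m.asIdeal,
      IsIntegral A a ∧ IsIntegral A b ∧ IsIntegral A c ∧ IsIntegral A d ∧
      Ideal.Quotient.mk m.asIdeal x = c * (a * Ideal.Quotient.mk m.asIdeal x
        + b * Ideal.Quotient.mk m.asIdeal y) ∧
      Ideal.Quotient.mk m.asIdeal y = d * (a * Ideal.Quotient.mk m.asIdeal x
        + b * Ideal.Quotient.mk m.asIdeal y) := by
    intro m
    obtain ⟨e, he, h | h⟩ := hval m (Ideal.Quotient.mk m.asIdeal x) (Ideal.Quotient.mk m.asIdeal y)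
    · exact ⟨0, 1, e, 1, isIntegral_zero, isIntegral_one, he, isIntegral_one,
        by simpa using h, by simp⟩
    · exact ⟨1, 0, 1, e, isIntegral_one, isIntegral_zero, isIntegral_one, he,
        by simp, by simpa using h⟩
  choose a b c d ha hb hc hd hx hy using hq
  let φ := IsArtinianRing.equivPi E
  have hφ : ∀ (f : ∀ m : MaximalSpectrum E, E ⧸ m.asIdeal) (m : MaximalSpectrum E),
      Ideal.Quotient.mk m.asIdeal (φ.symm f) = f m := by
    intro f m
    exact congrFun (φ.apply_symm_apply f) m
  have hint : ∀ f : ∀ m : MaximalSpectrum E, E ⧸ m.asIdeal, (∀ m, IsIntegral A (f m)) →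
      IsIntegral A (φ.symm f) := by
    intro f hf
    apply isIntegral_of_quotients
    intro m
    rw [hφ]
    exact hf m
  refine ⟨φ.symm a * x + φ.symm b * y, φ.symm a, φ.symm b, φ.symm c, φ.symm d,
    hint a ha, hint b hb, hint c hc, hint d hd, rfl, ?_, ?_⟩
  · apply ext_quotients
    intro m
    simp only [map_mul, map_add, hφ]
    exact hx m
  · apply ext_quotients
    intro m
    simp only [map_mul, map_add, hφ]
    exact hy m

lemma bezout_three {A E : Type*} [CommRing A] [CommRing E] [Algebra A E]
    (hbez : ∀ x y : E, ∃ z a b c d : E, IsIntegral A a ∧ IsIntegral A b ∧ IsIntegral A c ∧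
      IsIntegral A d ∧ z = a * x + b * y ∧ x = c * z ∧ y = d * z) (x : Fin 3 → E) :
    ∃ (z : E) (a c : Fin 3 → E), (∀ j, IsIntegral A (a j)) ∧ (∀ j, IsIntegral A (c j)) ∧
      z = ∑ j, a j * x j ∧ ∀ j, x j = c j * z := by
  obtain ⟨w, a, b, c, d, ha, hb, hc, hd, hw, h0, h1⟩ := hbez (x 0) (x 1)
  obtain ⟨z, a', b', c', d', ha', hb', hc', hd', hz, hw', h2⟩ := hbez w (x 2)
  refine ⟨z, ![a' * a, a' * b, b'], ![c * c', d * c', d'], ?_, ?_, ?_, ?_⟩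
  · intro j
    fin_cases j
    exacts [ha'.mul ha, ha'.mul hb, hb']
  · intro j
    fin_cases j
    exacts [hc.mul hc', hd.mul hc', hd']
  · rw [Fin.sum_univ_three]
    simp only [Matrix.cons_val]
    rw [hz]
    linear_combination a' * hw
  · intro j
    fin_cases j
    · change x 0 = c * c' * z
      linear_combination h0 + c * hw'
    · change x 1 = d * c' * z
      linear_combination h1 + d * hw'
    · exact h2

/-! ### Lattices in `F³` as submodules of `E` -/

open Matrix in
/-- A faithful representation of a reduced Artinian algebra has a vector with trivial
annihilator. -/
lemma exists_separating {F E : Type*} [Field F] [CommRing E] [Algebra F E]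
    [IsArtinianRing E] [IsReduced E]
    (i : E →ₐ[F] Matrix (Fin 3) (Fin 3) F) (hinj : Function.Injective i) :
    ∃ v : Fin 3 → F, ∀ c : E, i c *ᵥ v = 0 → c = 0 := by
  classical
  have : Fintype (MaximalSpectrum E) := Fintype.ofFinite _
  let φ := IsArtinianRing.equivPi E
  let e : MaximalSpectrum E → E := fun m => φ.symm (Pi.single m 1)
  have he : ∀ m, e m ≠ 0 := by
    intro m h
    have h2 := congrFun ((φ.symm_apply_eq).1 h) m
    rw [Pi.single_eq_same, map_zero, Pi.zero_apply] at h2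
    have := m.isMaximal
    exact one_ne_zero h2
  have hv : ∀ m, ∃ v : Fin 3 → F, i (e m) *ᵥ v ≠ 0 := by
    intro m
    by_contra! h
    apply he m
    apply hinj
    rw [map_zero]
    apply Matrix.mulVec_injective
    funext v
    rw [h v, zero_mulVec]
  choose v hv using hv
  have hee : ∀ m n, e m * e n = if m = n then e m else 0 := by
    intro m n
    change φ.symm _ * φ.symm _ = _
    rw [← map_mul]
    split_ifs with h
    · subst h
      rw [← Pi.single_mul, one_mul]
    · rw [← Pi.single_mul_left, Pi.single_eq_of_ne h, mul_zero, Pi.single_zero, map_zero]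
  refine ⟨∑ m, i (e m) *ᵥ v m, fun c hc => ?_⟩
  apply φ.injective
  rw [map_zero]
  funext m
  by_contra hne
  have hmax := m.isMaximal
  let := Ideal.Quotient.field m.asIdeal
  -- `d` inverts `c` on the block of `m`
  obtain ⟨d, hd⟩ : ∃ d : E, d * (c * e m) = e m := by
    refine ⟨φ.symm (Pi.single m ((φ c m)⁻¹)), ?_⟩
    apply φ.injective
    rw [map_mul, map_mul]
    simp only [e, φ.apply_symm_apply]
    funext n
    by_cases h : n = m
    · subst h
      simp only [Pi.mul_apply, Pi.single_eq_same, mul_one]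
      exact inv_mul_cancel₀ hne
    · simp [Pi.single_eq_of_ne h]
  apply hv m
  have h1 : i (e m) *ᵥ ∑ n, i (e n) *ᵥ v n = i (e m) *ᵥ v m := by
    rw [Matrix.mulVec_sum, Finset.sum_eq_single m]
    · rw [mulVec_mulVec, ← map_mul, hee, if_pos rfl]
    · intro n _ hn
      rw [mulVec_mulVec, ← map_mul, hee, if_neg hn.symm, map_zero, zero_mulVec]
    · simp
  rw [← h1]
  calc i (e m) *ᵥ ∑ n, i (e n) *ᵥ v n
      = i (d * e m * c) *ᵥ ∑ n, i (e n) *ᵥ v n := by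
        rw [show d * e m * c = e m by linear_combination hd]
    _ = 0 := by rw [map_mul i (d * e m) c, ← mulVec_mulVec, hc, mulVec_zero]

open Matrix in
/-- Let `O` be the ring of elements of `F` integral over `A`. The lattice `h O³`, when stable under
the elements of `E` integral over `A`, is generated over them by a single vector `i z v` with `z` a
unit; here `v` is an `E`-basis of `F³`. -/
lemma exists_generator {A F E : Type*} [CommRing A] [Field F] [CommRing E] [Algebra F E]
    [Algebra A F] [Algebra A E] [IsScalarTower A F E]
    (hbez : ∀ x y : E, ∃ z a b c d : E, IsIntegral A a ∧ IsIntegral A b ∧ IsIntegral A c ∧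
      IsIntegral A d ∧ z = a * x + b * y ∧ x = c * z ∧ y = d * z)
    (i : E →ₐ[F] Matrix (Fin 3) (Fin 3) F) (v : Fin 3 → F)
    (hv : Function.Bijective fun c : E => i c *ᵥ v)
    (h : (Matrix (Fin 3) (Fin 3) F)ˣ)
    (hconj : ∀ x : E, IsIntegral A x → ∀ a b, IsIntegral A
      (((h⁻¹ : (Matrix (Fin 3) (Fin 3) F)ˣ) * i x * h : Matrix (Fin 3) (Fin 3) F) a b)) :
    ∃ z : Eˣ, ∀ w : Fin 3 → F,
      (∀ a, IsIntegral A
        (((h⁻¹ : (Matrix (Fin 3) (Fin 3) F)ˣ) : Matrix (Fin 3) (Fin 3) F).mulVec w a)) ↔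
      ∃ r : E, IsIntegral A r ∧ w = i (r * z) *ᵥ v := by
  set H : Matrix (Fin 3) (Fin 3) F := (h : Matrix (Fin 3) (Fin 3) F) with hH
  set H' : Matrix (Fin 3) (Fin 3) F := ((h⁻¹ : (Matrix (Fin 3) (Fin 3) F)ˣ) :
    Matrix (Fin 3) (Fin 3) F) with hH'
  have hHH' : H * H' = 1 := h.mul_inv
  have hH'H : H' * H = 1 := h.inv_mul
  choose x hx using fun j : Fin 3 => hv.2 (H *ᵥ Pi.single j 1)
  obtain ⟨z, a, c, ha, hc, hz, hxz⟩ := bezout_three hbez x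
  have hexp : ∀ w : Fin 3 → F, w = i ((∑ j, algebraMap F E ((H' *ᵥ w) j) * c j) * z) *ᵥ v := by
    intro w
    have e1 : (∑ j, algebraMap F E ((H' *ᵥ w) j) * c j) * z
        = ∑ j, (H' *ᵥ w) j • x j := by
      rw [Finset.sum_mul]
      refine Finset.sum_congr rfl fun j _ => ?_
      rw [Algebra.smul_def, hxz j, mul_assoc]
    rw [e1, map_sum, Matrix.sum_mulVec]
    simp only [map_smul, Matrix.smul_mulVec]
    simp only [hx]
    simp only [← Matrix.mulVec_smul]
    rw [← Matrix.mulVec_sum]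
    have e2 : ∑ j, (H' *ᵥ w) j • (Pi.single j (1 : F) : Fin 3 → F) = H' *ᵥ w := by
      funext k
      simp [Finset.sum_apply, Pi.single_apply]
    rw [e2, mulVec_mulVec, hHH', one_mulVec]
  have hunit : IsUnit z := by
    have h1 := hexp v
    have h2 := hv.1 (show i 1 *ᵥ v = _ by rw [map_one, one_mulVec]; exact h1)
    exact IsUnit.of_mul_eq_one _ (by rw [mul_comm]; exact h2.symm)
  obtain ⟨z, rfl⟩ := hunit
  refine ⟨z, fun w => ⟨fun hw => ⟨_, ?_, hexp w⟩, ?_⟩⟩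
  · refine IsIntegral.sum _ fun j _ => IsIntegral.mul ?_ (hc j)
    exact (hw j).algebraMap
  · rintro ⟨r, hr, rfl⟩ k
    have e1 : H' *ᵥ (i (r * (z : E)) *ᵥ v) = ∑ j, (H' * i (r * a j) * H) *ᵥ Pi.single j 1 := by
      rw [hz, Finset.mul_sum, map_sum, Matrix.sum_mulVec, Matrix.mulVec_sum]
      refine Finset.sum_congr rfl fun j _ => ?_
      rw [← mul_assoc, map_mul i (r * a j) (x j), ← mulVec_mulVec, show i (x j) *ᵥ v = _ from hx j]
      simp only [mulVec_mulVec, mul_assoc]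
    rw [e1, Finset.sum_apply]
    refine IsIntegral.sum _ fun j _ => ?_
    rw [Matrix.mulVec_single_one]
    exact hconj _ (hr.mul (ha j)) k j

end CubicLattice

/-- Let `F` be a p-adic field (a finite extension of `ℚ_[p]`) with ring of integers
`O_F = integralClosure ℤ_[p] F`, let `E` be a cubic étale `F`-algebra (commutative,
reduced, of dimension 3 over `F`), let `O_E` be the integral closure of `O_F` in `E`,
and let `i : E → M₃(F)` be an injective `F`-algebra homomorphism with
`i(O_E) ⊆ M₃(O_F)`.  If `g ∈ GL₃(F)` satisfies `g⁻¹ · i(x) · g ∈ M₃(O_F)` for all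
`x ∈ O_E`, then `g = i(u) · k` for some `u ∈ E^×` and `k ∈ GL₃(O_F)` (a matrix with
entries in `O_F` admitting an inverse with entries in `O_F`). -/
theorem stmt_0 (p : ℕ) [Fact p.Prime]
    {F : Type*} [Field F] [Algebra ℚ_[p] F] [FiniteDimensional ℚ_[p] F]
    [Algebra ℤ_[p] F] [IsScalarTower ℤ_[p] ℚ_[p] F]
    {E : Type*} [CommRing E] [Algebra F E] [IsReduced E]
    (hdim : Module.finrank F E = 3)
    [Algebra (integralClosure ℤ_[p] F) E] [IsScalarTower (integralClosure ℤ_[p] F) F E]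
    (i : E →ₐ[F] Matrix (Fin 3) (Fin 3) F) (hinj : Function.Injective i)
    (hO : ∀ x ∈ integralClosure (integralClosure ℤ_[p] F) E,
      ∀ a b, i x a b ∈ integralClosure ℤ_[p] F)
    (g : (Matrix (Fin 3) (Fin 3) F)ˣ)
    (hconj : ∀ x ∈ integralClosure (integralClosure ℤ_[p] F) E,
      ∀ a b, ((g⁻¹ : (Matrix (Fin 3) (Fin 3) F)ˣ) * i x * g : Matrix (Fin 3) (Fin 3) F) a b
        ∈ integralClosure ℤ_[p] F) :
    ∃ (u : Eˣ) (k k' : Matrix (Fin 3) (Fin 3) F),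
      (∀ a b, k a b ∈ integralClosure ℤ_[p] F) ∧
      (∀ a b, k' a b ∈ integralClosure ℤ_[p] F) ∧
      k * k' = 1 ∧ k' * k = 1 ∧
      (g : Matrix (Fin 3) (Fin 3) F) = i (u : E) * k := by
  have : FiniteDimensional F E := Module.finite_of_finrank_pos (by omega)
  have : IsArtinianRing E := IsArtinianRing.of_finite F E
  let : Algebra ℚ_[p] E := ((algebraMap F E).comp (algebraMap ℚ_[p] F)).toAlgebra
  have : IsScalarTower ℚ_[p] F E := IsScalarTower.of_algebraMap_eq fun _ => rfl
  let : Algebra ℤ_[p] E := ((algebraMap F E).comp (algebraMap ℤ_[p] F)).toAlgebra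
  have : IsScalarTower ℤ_[p] F E := IsScalarTower.of_algebraMap_eq fun _ => rfl
  have : IsScalarTower ℤ_[p] ℚ_[p] E := IsScalarTower.of_algebraMap_eq fun x => by
    change algebraMap F E (algebraMap ℤ_[p] F x) = algebraMap F E (algebraMap ℚ_[p] F _)
    rw [IsScalarTower.algebraMap_apply ℤ_[p] ℚ_[p] F]
  have : Module.Finite ℚ_[p] E := Module.Finite.trans F E
  -- integrality over `ℤ_[p]` implies integrality along the given map `O_F → E`
  have hint : ∀ x : E, IsIntegral ℤ_[p] x → x ∈ integralClosure (integralClosure ℤ_[p] F) E := by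
    intro x hx
    refine CubicLattice.isIntegralElem_of_comp (algebraMap ℤ_[p] (integralClosure ℤ_[p] F)) _ ?_
    have heq : ∀ f : ℤ_[p] →+* E, f = algebraMap ℤ_[p] E := fun f => RingHom.ext fun t => by
      rw [CubicLattice.padic_ringHom_unique_etale p f t,
        IsScalarTower.algebraMap_apply ℤ_[p] ℚ_[p] E]
      rfl
    rw [heq (RingHom.comp _ _)]
    exact hx
  have hbez := CubicLattice.bezout (A := ℤ_[p]) (E := E) (by
    intro m x y
    have := m.isMaximal
    let := Ideal.Quotient.field m.asIdeal
    by_cases hy : y = 0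
    · exact ⟨0, isIntegral_zero, Or.inr (by rw [hy, zero_mul])⟩
    by_cases hx : x = 0
    · exact ⟨0, isIntegral_zero, Or.inl (by rw [hx, zero_mul])⟩
    rcases CubicLattice.padic_integral_or_inv p (x / y) with h | h
    · exact ⟨_, h, Or.inl (div_mul_cancel₀ x hy).symm⟩
    · exact ⟨_, h, Or.inr (by rw [inv_div, div_mul_cancel₀ y hx])⟩)
  obtain ⟨v, hv⟩ := CubicLattice.exists_separating i hinj
  have hbij : Function.Bijective fun c : E => (i c).mulVec v := by
    let L : E →ₗ[F] (Fin 3 → F) :=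
      { toFun := fun c => (i c).mulVec v
        map_add' := fun a b => by rw [map_add, Matrix.add_mulVec]
        map_smul' := fun a b => by rw [map_smul, Matrix.smul_mulVec, RingHom.id_apply] }
    have hL : Function.Injective L := (injective_iff_map_eq_zero L).2 hv
    exact ⟨hL, (LinearMap.injective_iff_surjective_of_finrank_eq_finrank
      (by rw [hdim, Module.finrank_fin_fun])).1 hL⟩
  obtain ⟨z₀, hz₀⟩ := CubicLattice.exists_generator (A := ℤ_[p]) hbez i v
    hbij 1 (fun x hx a b => by
      rw [inv_one, Units.val_one, one_mul, mul_one]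
      exact hO x (hint x hx) a b)
  obtain ⟨z₁, hz₁⟩ := CubicLattice.exists_generator (A := ℤ_[p]) hbez i v
    hbij g (fun x hx a b => hconj x (hint x hx) a b)
  simp only [inv_one, Units.val_one, Matrix.one_mulVec] at hz₀
  have hu : ∀ u : Eˣ, i (u : E) * i ((u⁻¹ : Eˣ) : E) = 1 := fun u => by
    rw [← map_mul, Units.mul_inv, map_one]
  have hu' : ∀ u : Eˣ, i ((u⁻¹ : Eˣ) : E) * i (u : E) = 1 := fun u => by
    rw [← map_mul, Units.inv_mul, map_one]
  have hone : ∀ j a, IsIntegral ℤ_[p] ((Pi.single j 1 : Fin 3 → F) a) := by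
    intro j a
    rw [Pi.single_apply]
    split_ifs
    exacts [isIntegral_one, isIntegral_zero]
  refine ⟨z₁ * z₀⁻¹, i (((z₁ * z₀⁻¹)⁻¹ : Eˣ) : E) * g,
    (g⁻¹ : (Matrix (Fin 3) (Fin 3) F)ˣ) * i ((z₁ * z₀⁻¹ : Eˣ) : E), ?_, ?_, ?_, ?_, ?_⟩
  · intro a b
    obtain ⟨r, hr, hw⟩ := (hz₁ ((g : Matrix (Fin 3) (Fin 3) F).mulVec (Pi.single b 1))).1 (by
      intro a
      rw [Matrix.mulVec_mulVec, Units.inv_mul, Matrix.one_mulVec]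
      exact hone b a)
    have := (hz₀ ((i (((z₁ * z₀⁻¹)⁻¹ : Eˣ) : E) * (g : Matrix (Fin 3) (Fin 3) F)).mulVec
      (Pi.single b 1))).2 ⟨r, hr, by
        rw [← Matrix.mulVec_mulVec, hw, Matrix.mulVec_mulVec, ← map_mul]
        congr 2
        rw [mul_left_comm, ← Units.val_mul]
        congr 2
        group⟩ a
    rwa [Matrix.mulVec_single_one] at this
  · intro a b
    obtain ⟨r, hr, hw⟩ := (hz₀ (Pi.single b 1)).1 (hone b)
    have := (hz₁ ((i ((z₁ * z₀⁻¹ : Eˣ) : E)).mulVec (Pi.single b 1))).2 ⟨r, hr, by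
        rw [hw, Matrix.mulVec_mulVec, ← map_mul]
        congr 2
        rw [mul_left_comm, ← Units.val_mul]
        congr 2
        group⟩ a
    rwa [Matrix.mulVec_mulVec, Matrix.mulVec_single_one] at this
  · rw [mul_assoc, ← mul_assoc (g : Matrix (Fin 3) (Fin 3) F), Units.mul_inv, one_mul, hu']
  · rw [mul_assoc, ← mul_assoc (i _), hu, one_mul, Units.inv_mul]
  · rw [← mul_assoc, hu, one_mul]
end

section
/- Let F be a p-adic field with ring of integers O_F, let K be an unramified quadratic field extension of F with ring of integers O_K and nontrivial F-automorphism k ↦ k̄ (extended entrywise to matrices). Set U₃(F) := {g ∈ GL₃(K) : g · ᵗḡ = 1}, U₃(O_F) := U₃(F) ∩ GL₃(O_K), and J(O_F) := {x ∈ M₃(O_K) : ᵗx̄ = x}. Let E be a cubic étale F-algebra, O_E the integral closure of O_F in E, L := E ⊗_F K with involution l ↦ l̄ induced by id_E ⊗ (conjugation of K/F), and L¹ := {l ∈ L^× : l̄ · l = 1}. Let i : L → M₃(K) be an injective K-algebra homomorphism satisfying i(l̄) = ᵗ( \overline{i(l)} ) for all l ∈ L and such that i(x) ∈ J(O_F)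 for every x ∈ O_E. If g ∈ U₃(F) satisfies g⁻¹ · i(x) · g ∈ J(O_F) for every x ∈ O_E, then g ∈ i(L¹) · U₃(O_F). -/
/-!
The two lattices `O_K³` and `g O_K³` in `K³` are stable under `i(O_E)`, and the argument compares
them as modules over the ring of integers `O_L` of `L = K ⊗ E`.

*Reduction to `O_L`.* Since `K/F` is unramified, there is an integer `θ` of `K` with `θ - σ θ` a unit
(`exists_theta`), whence `O_L = O_E + θ O_E` (`integral_coords`). Both lattices are therefore
`O_L`-stable.

*Principality.* `L` is reduced and finite over `ℚ_p`, hence a product of fields, whose rings of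
integers are valuation rings (`exists_idem_split`). So finitely generated `O_L`-submodules of `L` are
principal (`exists_gen`). As `K³` is free of rank one over `L` (`exists_cyclic`), each lattice is
`O_L · i(b) v` for one fixed vector `v` (`exists_lattice_gen`). The quotient `a` of the two generators
satisfies `i(a) O_K³ = g O_K³` (`transfer`), so that `g⁻¹ i(a)` lies in `GL₃(O_K)`.

*Correction to norm one.* Because `g` is unitary, `i(a · τ a)` is the product of `g⁻¹ i(a)` with its
adjoint, so `a · τ a` is a unit of `O_L`. On each factor of `L` fixed by the involution `τ`, this makes
`a` itself a unit; on a pair of factors interchanged by `τ`, the element `a` can be changed by a unit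
into one of norm one (`norm_one_part`). This gives `l ∈ L¹` with `l a⁻¹` a unit of `O_L`, and then
`k = i(l)⁻¹ g` is unitary and integral together with its inverse (`abstract_main`).

The ring `O_E` is formed with respect to an `O_F`-algebra structure on `E` whose compatibility with
the `F`-algebra structure is not needed: a ring homomorphism from `ℤ_p` to a finite reduced
`ℚ_p`-algebra is unique, even without continuity (`hom_unique`), so the elements of `E` integral over
`O_F` are those integral over `ℤ_p`.
-/

open Matrix
open scoped TensorProduct

set_option synthInstance.maxHeartbeats 1000000
set_option maxHeartbeats 2000000

/-! ### Integrality in finite reduced `ℚ_p`-algebras -/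

/-- The integral closure of `ℤ_p` in a finite extension of `ℚ_p` is a valuation ring: it is the unit
ball of the spectral norm, which is multiplicative. -/
theorem isIntegral_or_inv (p : ℕ) [Fact p.Prime] {M : Type*} [Field M] [Algebra ℚ_[p] M]
    [FiniteDimensional ℚ_[p] M] [Algebra ℤ_[p] M] [IsScalarTower ℤ_[p] ℚ_[p] M] (x : M) :
    IsIntegral ℤ_[p] x ∨ IsIntegral ℤ_[p] x⁻¹ := by
  have key : ∀ y : M, spectralNorm ℚ_[p] M y ≤ 1 → IsIntegral ℤ_[p] y := by
    intro y hy
    have hyi : IsIntegral ℚ_[p] y := Algebra.IsIntegral.isIntegral y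
    rw [spectralNorm, spectralValue_le_one_iff (minpoly.monic hyi)] at hy
    have hl : minpoly ℚ_[p] y ∈ Polynomial.lifts (algebraMap ℤ_[p] ℚ_[p]) := by
      rw [Polynomial.lifts_iff_coeff_lifts]
      exact fun n => ⟨⟨_, hy n⟩, rfl⟩
    obtain ⟨q, hq, -, hqm⟩ :=
      Polynomial.lifts_and_natDegree_eq_and_monic hl (minpoly.monic hyi)
    refine ⟨q, hqm, ?_⟩
    rw [← Polynomial.aeval_def, ← Polynomial.aeval_map_algebraMap ℚ_[p], hq, minpoly.aeval]
  by_cases hx : x = 0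
  · left; rw [hx]; exact isIntegral_zero
  have h1 := spectralAlgNorm_mul (K := ℚ_[p]) (L := M) x x⁻¹
  rw [mul_inv_cancel₀ hx, spectralAlgNorm_one, spectralAlgNorm_def, spectralAlgNorm_def] at h1
  rcases le_total (spectralNorm ℚ_[p] M x) 1 with h | h
  · exact Or.inl (key _ h)
  · refine Or.inr (key _ ?_)
    have h0 := spectralNorm_nonneg (K := ℚ_[p]) (L := M) x⁻¹
    nlinarith

/-- In a reduced Artinian ring, which is the product of its residue fields, integrality is checked
factor by factor: the product of the annihilating polynomials annihilates every component. -/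
theorem isIntegral_of_quotients {R L : Type*} [CommRing R] [CommRing L] [Algebra R L]
    [IsArtinianRing L] [IsReduced L] {x : L}
    (h : ∀ m : MaximalSpectrum L, IsIntegral R (Ideal.Quotient.mk m.asIdeal x)) :
    IsIntegral R x := by
  choose f hf hfx using h
  have := Fintype.ofFinite (MaximalSpectrum L)
  refine ⟨∏ m, f m, Polynomial.monic_prod_of_monic _ _ fun m _ => hf m, ?_⟩
  rw [← Polynomial.aeval_def]
  apply (IsArtinianRing.equivPi L).injective
  funext m
  rw [IsArtinianRing.equivPi_apply, map_zero, Pi.zero_apply, ← Ideal.Quotient.mkₐ_eq_mk R,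
    ← Polynomial.aeval_algHom_apply, map_prod]
  exact Finset.prod_eq_zero (Finset.mem_univ m) (hfx m)

/-- The valuation-ring dichotomy in a product of fields: the idempotent `e` selects the factors where
`x` is integral, and on the complementary factors `y` is the integral inverse of `x`. -/
theorem exists_idem_split (p : ℕ) [Fact p.Prime] {L : Type*} [CommRing L] [Algebra ℚ_[p] L]
    [FiniteDimensional ℚ_[p] L] [Algebra ℤ_[p] L] [IsScalarTower ℤ_[p] ℚ_[p] L] [IsReduced L]
    (x : L) : ∃ e y : L, e * e = e ∧ IsIntegral ℤ_[p] (e * x) ∧ IsIntegral ℤ_[p] y ∧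
      (1 - e) * (x * y) = 1 - e := by
  classical
  have : IsArtinianRing L := isArtinian_of_tower ℚ_[p] inferInstance
  let P : MaximalSpectrum L → Prop := fun m => IsIntegral ℤ_[p] (Ideal.Quotient.mk m.asIdeal x)
  let inv : ∀ m : MaximalSpectrum L, L ⧸ m.asIdeal := fun m =>
    letI := Ideal.Quotient.field m.asIdeal
    (Ideal.Quotient.mk m.asIdeal x)⁻¹
  let ψ := IsArtinianRing.equivPi L
  obtain ⟨e, he⟩ := ψ.surjective (fun m => if P m then 1 else 0)
  obtain ⟨y, hy⟩ := ψ.surjective (fun m => if P m then 0 else inv m)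
  have he' : ∀ m : MaximalSpectrum L, Ideal.Quotient.mk m.asIdeal e = if P m then 1 else 0 :=
    fun m => congrFun he m
  have hy' : ∀ m : MaximalSpectrum L, Ideal.Quotient.mk m.asIdeal y = if P m then 0 else inv m :=
    fun m => congrFun hy m
  have ext : ∀ a b : L, (∀ m : MaximalSpectrum L,
      Ideal.Quotient.mk m.asIdeal a = Ideal.Quotient.mk m.asIdeal b) → a = b :=
    fun a b h => ψ.injective (funext h)
  refine ⟨e, y, ?_, ?_, ?_, ?_⟩
  · refine ext _ _ fun m => ?_
    rw [map_mul, he']; split_ifs <;> simp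
  · refine isIntegral_of_quotients fun m => ?_
    rw [map_mul, he']
    by_cases h : P m
    · rw [if_pos h, one_mul]; exact h
    · rw [if_neg h, zero_mul]; exact isIntegral_zero
  · refine isIntegral_of_quotients fun m => ?_
    rw [hy']
    by_cases h : P m
    · rw [if_pos h]; exact isIntegral_zero
    · rw [if_neg h]
      let _ := Ideal.Quotient.field m.asIdeal
      have : FiniteDimensional ℚ_[p] (L ⧸ m.asIdeal) := 
        Module.Finite.of_surjective (Ideal.Quotient.mkₐ ℚ_[p] m.asIdeal).toLinearMap
          Ideal.Quotient.mk_surjective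
      exact (isIntegral_or_inv p (Ideal.Quotient.mk m.asIdeal x)).resolve_left h
  · refine ext _ _ fun m => ?_
    rw [map_mul, map_sub, map_one, he', map_mul, hy']
    by_cases h : P m
    · simp [h]
    · let _ := Ideal.Quotient.field m.asIdeal
      have h0 : Ideal.Quotient.mk m.asIdeal x ≠ 0 := by
        intro h0
        apply h
        change IsIntegral _ _
        rw [h0]; exact isIntegral_zero
      rw [if_neg h, if_neg h, mul_inv_cancel₀ h0, sub_zero, one_mul]

/-- Reduced Artinian rings are von Neumann regular. -/
theorem exists_quasiInv {L : Type*} [CommRing L] [IsArtinianRing L] [IsReduced L] (y : L) :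
    ∃ y' : L, y * y' * y = y := by
  have : IsSemisimpleRing L := IsArtinianRing.isSemisimpleRing_of_isReduced L
  obtain ⟨e, he, hI⟩ := IsSemisimpleRing.ideal_eq_span_idempotent (Ideal.span {y})
  obtain ⟨a, ha⟩ := Ideal.mem_span_singleton.1 (hI ▸ Ideal.mem_span_singleton_self y)
  obtain ⟨b, hb⟩ := Ideal.mem_span_singleton.1 (hI ▸ Ideal.mem_span_singleton_self e)
  refine ⟨b, ?_⟩
  rw [← hb, ha, ← mul_assoc, he]

/-! ### Principal lattices -/

/-- Any two elements of `L` generate a principal `O_L`-submodule: on the factors of `L` where `x / y`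
is integral the generator is `y`, elsewhere it is `x`. -/
theorem exists_gen_two (p : ℕ) [Fact p.Prime] {L : Type*} [CommRing L] [Algebra ℚ_[p] L]
    [FiniteDimensional ℚ_[p] L] [Algebra ℤ_[p] L] [IsScalarTower ℤ_[p] ℚ_[p] L] [IsReduced L]
    (x y : L) : ∃ a b c d : L, IsIntegral ℤ_[p] a ∧ IsIntegral ℤ_[p] b ∧ IsIntegral ℤ_[p] c ∧
      IsIntegral ℤ_[p] d ∧ x = c * (a * x + b * y) ∧ y = d * (a * x + b * y) := by
  have : IsArtinianRing L := isArtinian_of_tower ℚ_[p] inferInstance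
  have idem : ∀ u : L, u * u = u → IsIntegral ℤ_[p] u := fun u hu =>
    ⟨Polynomial.X ^ 2 - Polynomial.X, by monicity!, by simp [pow_two, hu]⟩
  obtain ⟨y', hy'⟩ := exists_quasiInv y
  obtain ⟨e, t, he, h1, h2, h3⟩ := exists_idem_split p (x * y')
  set u := y * y' with hu
  have huu : u * u = u := by rw [hu]; linear_combination y' * hy'
  have huy : u * y = y := hy'
  have hu' : IsIntegral ℤ_[p] u := idem u huu
  have he' : IsIntegral ℤ_[p] e := idem e he
  obtain ⟨f, hf⟩ : ∃ f, f = e * u := ⟨_, rfl⟩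
  have hff : f * f = f := by rw [hf]; linear_combination u * u * he + e * huu
  have hfi : IsIntegral ℤ_[p] f := idem f hff
  have hfi' : IsIntegral ℤ_[p] (1 - f) := isIntegral_one.sub hfi
  obtain ⟨c, hc⟩ : ∃ c, c = e * (x * y') := ⟨_, rfl⟩
  obtain ⟨d, hd⟩ : ∃ d, d = t * (1 - e) * u := ⟨_, rfl⟩
  have hci : IsIntegral ℤ_[p] c := hc ▸ h1
  have hdi : IsIntegral ℤ_[p] d := hd ▸ (h2.mul (isIntegral_one.sub he')).mul hu'
  have hfx : f * x = c * y := by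
    rw [hf, hc, hu]; ring
  have hfy : (1 - f) * y = d * x := by
    rw [hf, hd]; linear_combination - e * huy - y * h3 - t * (1 - e) * x * hu
  refine ⟨1 - f, f, f * c + (1 - f), f + (1 - f) * d, hfi', hfi, (hfi.mul hci).add hfi',
    hfi.add (hfi'.mul hdi), ?_, ?_⟩
  · linear_combination (-2 * x - c * y + c * x + y) * hff + f * hfx
  · linear_combination (x - 2 * y - d * x + d * y) * hff + (1 - f) * hfy

/-- Any three elements of `L` generate a principal `O_L`-submodule. -/
theorem exists_gen (p : ℕ) [Fact p.Prime] {L : Type*} [CommRing L] [Algebra ℚ_[p] L]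
    [FiniteDimensional ℚ_[p] L] [Algebra ℤ_[p] L] [IsScalarTower ℤ_[p] ℚ_[p] L] [IsReduced L]
    (w : Fin 3 → L) : ∃ (b : L) (c d : Fin 3 → L), (∀ k, IsIntegral ℤ_[p] (c k)) ∧
      (∀ k, IsIntegral ℤ_[p] (d k)) ∧ (∀ k, w k = c k * b) ∧ b = ∑ k, d k * w k := by
  obtain ⟨a₁, b₁, c₁, d₁, ha₁, hb₁, hc₁, hd₁, h0, h1⟩ := exists_gen_two p (w 0) (w 1)
  obtain ⟨a₂, b₂, c₂, d₂, ha₂, hb₂, hc₂, hd₂, h01, h2⟩ :=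
    exists_gen_two p (a₁ * w 0 + b₁ * w 1) (w 2)
  refine ⟨a₂ * (a₁ * w 0 + b₁ * w 1) + b₂ * w 2, ![c₁ * c₂, d₁ * c₂, d₂],
    ![a₂ * a₁, a₂ * b₁, b₂], ?_, ?_, ?_, ?_⟩
  · intro k; fin_cases k
    exacts [hc₁.mul hc₂, hd₁.mul hc₂, hd₂]
  · intro k; fin_cases k
    exacts [ha₂.mul ha₁, ha₂.mul hb₁, hb₂]
  · intro k; fin_cases k
    · exact h0.trans ((congrArg (c₁ * ·) h01).trans (mul_assoc _ _ _).symm)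
    · exact h1.trans ((congrArg (d₁ * ·) h01).trans (mul_assoc _ _ _).symm)
    · exact h2
  · simp [Fin.sum_univ_three]; ring

/-- Via a faithful action of a reduced algebra `L` of dimension 3, the space `K³` is free of rank one
over `L`. Annihilators of vectors are generated by idempotents, which allows two vectors to be combined
into one whose annihilator kills both; a vector whose annihilator kills the standard basis is
cyclic. -/
theorem exists_cyclic {K L : Type*} [Field K] [CommRing L] [Algebra K L]
    [FiniteDimensional K L] [IsReduced L] (hdim : Module.finrank K L = 3)
    (i : L →ₐ[K] Matrix (Fin 3) (Fin 3) K) (hinj : Function.Injective i) :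
    ∃ v : Fin 3 → K, Function.Bijective fun l : L => i l *ᵥ v := by
  have : IsArtinianRing L := isArtinian_of_tower K inferInstance
  have : IsSemisimpleRing L := IsArtinianRing.isSemisimpleRing_of_isReduced L
  have step : ∀ v w : Fin 3 → K, ∃ u : Fin 3 → K, ∀ l : L, i l *ᵥ u = 0 →
      i l *ᵥ v = 0 ∧ i l *ᵥ w = 0 := by
    intro v w
    let I : Ideal L :=
      { carrier := {l | i l *ᵥ v = 0}
        zero_mem' := by simp
        add_mem' := by
          intro a b ha hb
          simp only [Set.mem_ofPred_eq] at *
          rw [map_add, add_mulVec, ha, hb, add_zero]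
        smul_mem' := by
          intro a b hb
          simp only [Set.mem_ofPred_eq] at *
          rw [smul_eq_mul, map_mul, ← mulVec_mulVec, hb, mulVec_zero] }
    have hI : ∀ l, l ∈ I ↔ i l *ᵥ v = 0 := fun l => Iff.rfl
    obtain ⟨e, he, hIe⟩ := IsSemisimpleRing.ideal_eq_span_idempotent I
    have hev : i e *ᵥ v = 0 := (hI e).1 (hIe ▸ Ideal.mem_span_singleton_self e)
    refine ⟨v + i e *ᵥ w, fun l hl => ?_⟩
    rw [mulVec_add, mulVec_mulVec, ← map_mul] at hl
    have h1 : i ((1 - e) * l) *ᵥ v = 0 := by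
      have := congrArg (fun z => i (1 - e) *ᵥ z) hl
      simp only [mulVec_add, mulVec_mulVec, ← map_mul, mulVec_zero] at this
      rwa [show (1 - e) * (l * e) = 0 by linear_combination - l * he.eq, map_zero, zero_mulVec,
        add_zero] at this
    have hlv : i l *ᵥ v = 0 := by
      have h2 : i (l * e) *ᵥ v = 0 := by rw [map_mul, ← mulVec_mulVec, hev, mulVec_zero]
      have := congrArg₂ (· + ·) h1 h2
      simp only [← add_mulVec, ← map_add, add_zero] at this
      rwa [show (1 - e) * l + l * e = l by ring] at this
    refine ⟨hlv, ?_⟩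
    obtain ⟨a, ha⟩ := Ideal.mem_span_singleton.1 (hIe ▸ (hI l).2 hlv)
    rw [hlv, zero_add] at hl
    rwa [show l * e = l by rw [ha]; linear_combination a * he.eq] at hl
  obtain ⟨u, hu⟩ := step (Pi.single 0 1) (Pi.single 1 1)
  obtain ⟨v, hv⟩ := step u (Pi.single 2 1)
  let φ : L →ₗ[K] (Fin 3 → K) :=
    { toFun := fun l => i l *ᵥ v
      map_add' := fun a b => by rw [map_add, add_mulVec]
      map_smul' := fun a b => by rw [map_smul, smul_mulVec]; rfl }
  refine ⟨v, ?_⟩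
  have hφ : Function.Injective φ := by
    rw [injective_iff_map_eq_zero]
    intro l hl
    obtain ⟨h01, h2⟩ := hv l hl
    obtain ⟨h0, h1⟩ := hu l h01
    apply hinj
    rw [map_zero]
    ext a k
    fin_cases k
    · simpa using congrFun h0 a
    · simpa using congrFun h1 a
    · simpa using congrFun h2 a
  exact ⟨hφ, (LinearMap.injective_iff_surjective_of_finrank_eq_finrank (by simp [hdim])).1 hφ⟩

/-- If the columns of an invertible matrix `g` are written as `i (w k) v` with `v` a cyclic vector,
the `O_L`-module they span is `O_L · i(b) v` for a unit `b` of `L`. -/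
theorem exists_lattice_gen (p : ℕ) [Fact p.Prime] {K L : Type*} [Field K] [CommRing L]
    [Algebra K L] [Algebra ℚ_[p] L]
    [FiniteDimensional ℚ_[p] L] [Algebra ℤ_[p] L] [IsScalarTower ℤ_[p] ℚ_[p] L] [IsReduced L]
    (i : L →ₐ[K] Matrix (Fin 3) (Fin 3) K) (v : Fin 3 → K)
    (hv : Function.Bijective fun l : L => i l *ᵥ v) (g h : Matrix (Fin 3) (Fin 3) K)
    (hgh : g * h = 1) :
    ∃ (b b' : L) (c d : Fin 3 → L), b * b' = 1 ∧ (∀ k, IsIntegral ℤ_[p] (c k)) ∧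
      (∀ k, IsIntegral ℤ_[p] (d k)) ∧ (∀ k, g *ᵥ Pi.single k 1 = i (c k * b) *ᵥ v) ∧
      i b *ᵥ v = ∑ k, i (d k) *ᵥ (g *ᵥ Pi.single k 1) := by
  choose w hw using fun k : Fin 3 => hv.2 (g *ᵥ Pi.single k 1)
  simp only at hw
  obtain ⟨b, c, d, hc, hd, hwc, hb⟩ := exists_gen p w
  have h1 : (∑ k, (h *ᵥ v) k • w k) = 1 := by
    apply hv.1
    simp only [map_sum, map_smul, sum_mulVec, smul_mulVec, hw, map_one, one_mulVec]
    simp only [← mulVec_smul, ← mulVec_sum]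
    conv_rhs => rw [← one_mulVec v, ← hgh, ← mulVec_mulVec]
    congr 1
    ext k
    simp [Pi.single_apply]
  refine ⟨b, ∑ k, (h *ᵥ v) k • c k, c, d, ?_, hc, hd, fun k => ?_, ?_⟩
  · rw [← h1, Finset.mul_sum]
    refine Finset.sum_congr rfl fun k _ => ?_
    rw [hwc, mul_smul_comm, mul_comm]
  · rw [← hwc, hw]
  · rw [hb]
    simp only [map_sum, sum_mulVec, map_mul, ← mulVec_mulVec, hw]

/-- Multiplication by `b₂ / b₁` carries the lattice of `g₁` into the `O_L`-stable lattice of `g₂`;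
the conclusion expresses this in the basis given by the columns of `g₂`. -/
theorem transfer (p : ℕ) [Fact p.Prime] {K L : Type*} [Field K] [Algebra ℤ_[p] K] [CommRing L]
    [Algebra K L] [Algebra ℤ_[p] L]
    (i : L →ₐ[K] Matrix (Fin 3) (Fin 3) K) (v : Fin 3 → K)
    {g₁ g₂ h₂ : Matrix (Fin 3) (Fin 3) K} {b₁ b₁' b₂ : L} {c d : Fin 3 → L}
    (hb : b₁ * b₁' = 1) (hc : ∀ k, IsIntegral ℤ_[p] (c k)) (hd : ∀ k, IsIntegral ℤ_[p] (d k))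
    (h₁ : ∀ k, g₁ *ᵥ Pi.single k 1 = i (c k * b₁) *ᵥ v)
    (h₂' : i b₂ *ᵥ v = ∑ k, i (d k) *ᵥ (g₂ *ᵥ Pi.single k 1))
    (hint : ∀ x : L, IsIntegral ℤ_[p] x → ∀ r s, IsIntegral ℤ_[p] ((h₂ * i x * g₂) r s))
    (r s : Fin 3) : IsIntegral ℤ_[p] ((h₂ * i (b₂ * b₁') * g₁) r s) := by
  have : (h₂ * i (b₂ * b₁') * g₁) *ᵥ Pi.single s 1 =
      ∑ k, (h₂ * i (c s * d k) * g₂) *ᵥ Pi.single k 1 := by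
    have h3 : i (b₂ * b₁') *ᵥ (i (c s * b₁) *ᵥ v) = i (c s) *ᵥ (i b₂ *ᵥ v) := by
      rw [mulVec_mulVec, mulVec_mulVec, ← map_mul, ← map_mul]
      congr 2
      linear_combination b₂ * c s * hb
    rw [← mulVec_mulVec, ← mulVec_mulVec, h₁, h3, h₂', mulVec_sum, mulVec_sum]
    simp only [mulVec_mulVec, map_mul, mul_assoc]
  have h4 := congrFun this r
  rw [mulVec_single_one, Finset.sum_apply] at h4
  simp only [mulVec_single_one] at h4
  change (h₂ * i (b₂ * b₁') * g₁) r s = _ at h4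
  rw [h4]
  exact IsIntegral.sum _ fun k _ => hint _ ((hc s).mul (hd k)) r k

/-! ### The norm-one component -/

/-- If `a · τ(a)` is a unit of `O_L`, then `a` is a unit of `O_L` times an element of norm one. With
`e` cutting out the factors where `a` is integral and `f = τ(e)`, the norm-one element is
`e f + (1 - e)(1 - f) + e (1 - f) a + f (1 - e) τ(a)⁻¹`. -/
theorem norm_one_part (p : ℕ) [Fact p.Prime] {L : Type*} [CommRing L] [Algebra ℚ_[p] L]
    [FiniteDimensional ℚ_[p] L] [Algebra ℤ_[p] L] [IsScalarTower ℤ_[p] ℚ_[p] L] [IsReduced L]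
    (τ : L →ₐ[ℤ_[p]] L) (hτ : ∀ x, τ (τ x) = x) {a a' : L} (ha : a * a' = 1)
    (hN : IsIntegral ℤ_[p] (a * τ a)) (hN' : IsIntegral ℤ_[p] (a' * τ a')) :
    ∃ l : L, τ l * l = 1 ∧ IsIntegral ℤ_[p] (τ l * a) ∧ IsIntegral ℤ_[p] (l * a') := by
  have idem : ∀ u : L, u * u = u → IsIntegral ℤ_[p] u := fun u hu =>
    ⟨Polynomial.X ^ 2 - Polynomial.X, by monicity!, by simp [pow_two, hu]⟩
  obtain ⟨e, y, he, h1, h2, h3⟩ := exists_idem_split p a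
  have hei := idem e he
  have h4 : IsIntegral ℤ_[p] ((1 - e) * a') := by
    rw [show (1 - e) * a' = (1 - e) * y by linear_combination - a' * h3 + (1 - e) * y * ha]
    exact (isIntegral_one.sub hei).mul h2
  obtain ⟨f, hf⟩ : ∃ f, f = τ e := ⟨_, rfl⟩
  have hff : f * f = f := by rw [hf, ← map_mul, he]
  have hfi := idem f hff
  have hfe : τ f = e := by rw [hf, hτ]
  have hτa : τ a * τ a' = 1 := by rw [← map_mul, ha, map_one]
  have h5 : IsIntegral ℤ_[p] (f * a') := by
    have := (h1.map τ).mul hN'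
    rw [map_mul, ← hf] at this
    rwa [show f * τ a * (a' * τ a') = f * a' by linear_combination f * a' * hτa] at this
  have h6 : IsIntegral ℤ_[p] ((1 - f) * a) := by
    have := (h4.map τ).mul hN
    rw [map_mul, map_sub, map_one, ← hf] at this
    rwa [show (1 - f) * τ a' * (a * τ a) = (1 - f) * a by
      linear_combination (1 - f) * a * hτa] at this
  have hei' := isIntegral_one.sub hei
  have hfi' := isIntegral_one.sub hfi
  have hτl : τ (e * f + (1 - e) * (1 - f) + e * (1 - f) * a + f * (1 - e) * τ a') =
      e * f + (1 - e) * (1 - f) + f * (1 - e) * τ a + e * (1 - f) * a' := by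
    simp only [map_add, map_mul, map_sub, map_one, hτ, hfe, ← hf]; ring
  refine ⟨e * f + (1 - e) * (1 - f) + e * (1 - f) * a + f * (1 - e) * τ a', ?_, ?_, ?_⟩ <;>
    try rw [hτl]
  · obtain ⟨A, hA⟩ : ∃ A, A = e * f + (1 - e) * (1 - f) := ⟨_, rfl⟩
    obtain ⟨B, hB⟩ : ∃ B, B = e * (1 - f) := ⟨_, rfl⟩
    obtain ⟨C, hC⟩ : ∃ C, C = f * (1 - e) := ⟨_, rfl⟩
    have hsum : A + B + C = 1 := by rw [hA, hB, hC]; ring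
    have hAB : A * B = 0 := by
      rw [hA, hB]; linear_combination (1 - f) * (2 * f - 1) * he - e * hff
    have hAC : A * C = 0 := by
      rw [hA, hC]; linear_combination (1 - e) * (2 * e - 1) * hff - f * he
    have hBC : B * C = 0 := by
      rw [hB, hC]; linear_combination - f * (1 - f) * he
    rw [← hA, ← hB, ← hC]
    have hAA : A * A = A := by linear_combination A * hsum - hAB - hAC
    have hBB : B * B = B := by linear_combination B * hsum - hAB - hBC
    have hCC : C * C = C := by linear_combination C * hsum - hAC - hBC
    linear_combination hAA + (a + a') * hAB + (τ a + τ a') * hAC + a * a' * hBB + B * ha +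
      τ a * τ a' * hCC + C * hτa + (a * τ a + a' * τ a') * hBC + hsum
  · rw [show (e * f + (1 - e) * (1 - f) + f * (1 - e) * τ a + e * (1 - f) * a') * a =
      (e * a) * f + (1 - e) * ((1 - f) * a) + f * (1 - e) * (a * τ a) + e * (1 - f) by
        linear_combination e * (1 - f) * ha]
    exact (((h1.mul hfi).add (hei'.mul h6)).add ((hfi.mul hei').mul hN)).add (hei.mul hfi')
  · rw [show (e * f + (1 - e) * (1 - f) + e * (1 - f) * a + f * (1 - e) * τ a') * a' =
      e * (f * a') + (1 - f) * ((1 - e) * a') + e * (1 - f) + f * (1 - e) * (a' * τ a') by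
        linear_combination e * (1 - f) * ha]
    exact (((hei.mul h5).add (hfi'.mul h4)).add (hei.mul hfi')).add ((hfi.mul hei').mul hN')

/-! ### The unramified quadratic extension -/

theorem invol {F K : Type*} [Field F] [Field K] [Algebra F K] (hquad : Module.finrank F K = 2)
    (σ : K ≃ₐ[F] K) (x : K) : σ (σ x) = x := by
  have : FiniteDimensional F K := Module.finite_of_finrank_pos (by omega)
  have hcard : Nat.card (K ≃ₐ[F] K) ∣ 2 := by
    have h1 := IntermediateField.finrank_fixedField_eq_card (⊤ : Subgroup (K ≃ₐ[F] K))
    have h2 := Module.finrank_mul_finrank F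
      (IntermediateField.fixedField (⊤ : Subgroup (K ≃ₐ[F] K))) K
    rw [h1, hquad, Subgroup.card_top] at h2
    exact Dvd.intro_left _ h2
  have h : σ ^ 2 = 1 := orderOf_dvd_iff_pow_eq_one.1 ((orderOf_dvd_natCard σ).trans hcard)
  have := congrArg (fun f : K ≃ₐ[F] K => f x) h
  simpa [pow_two] using this

/-- An automorphism other than the identity of a quadratic extension fixes only the base field. -/
theorem fixed {F K : Type*} [Field F] [Field K] [Algebra F K] (hquad : Module.finrank F K = 2)
    (σ : K ≃ₐ[F] K) (hσ : σ ≠ AlgEquiv.refl) (x : K) (hx : σ x = x) :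
    x ∈ (algebraMap F K).range := by
  have := IntermediateField.isSimpleOrder_of_finrank_prime F K (hquad ▸ Nat.prime_two)
  let S := IntermediateField.fixedField (Subgroup.zpowers σ)
  have hS : ∀ y, σ y = y → y ∈ S := by
    intro y hy
    rw [IntermediateField.mem_fixedField_iff]
    intro f hf
    exact Subgroup.zpowers_le.2 (show σ ∈ MulAction.stabilizer (K ≃ₐ[F] K) y from hy) hf
  rcases eq_bot_or_eq_top S with h | h
  · exact IntermediateField.mem_bot.1 (h ▸ hS x hx)
  · exfalso
    apply hσ
    ext y
    have : y ∈ S := h ▸ IntermediateField.mem_top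
    exact (IntermediateField.mem_fixedField_iff _ _).1 this σ (Subgroup.mem_zpowers σ)

theorem valRing (p : ℕ) [Fact p.Prime] (M : Type*) [Field M] [Algebra ℚ_[p] M]
    [FiniteDimensional ℚ_[p] M] [Algebra ℤ_[p] M] [IsScalarTower ℤ_[p] ℚ_[p] M] :
    ValuationRing (integralClosure ℤ_[p] M) := by
  have : IsFractionRing (integralClosure ℤ_[p] M) M :=
    integralClosure.isFractionRing_of_finite_extension ℚ_[p] M
  rw [ValuationRing.iff_isInteger_or_isInteger _ M]
  intro x
  rcases isIntegral_or_inv p x with h | h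
  · exact Or.inl ⟨⟨x, h⟩, rfl⟩
  · exact Or.inr ⟨⟨x⁻¹, h⟩, rfl⟩

/-- The residue field in residue characteristic two is perfect, so every integer is a square modulo
the maximal ideal. -/
theorem sqrt_res (M : Type*) [Field M] [Algebra ℚ_[2] M]
    [FiniteDimensional ℚ_[2] M] [Algebra ℤ_[2] M] [IsScalarTower ℤ_[2] ℚ_[2] M]
    [IsLocalRing (integralClosure ℤ_[2] M)] (x : integralClosure ℤ_[2] M) :
    ∃ y, x - y * y ∈ IsLocalRing.maximalIdeal (integralClosure ℤ_[2] M) := by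
  have hinj : Function.Injective (algebraMap ℤ_[2] (integralClosure ℤ_[2] M)) := by
    have h1 : Function.Injective (algebraMap ℤ_[2] M) := by
      rw [IsScalarTower.algebraMap_eq ℤ_[2] ℚ_[2] M]
      exact (algebraMap ℚ_[2] M).injective.comp (IsFractionRing.injective ℤ_[2] ℚ_[2])
    intro a b hab
    exact h1 (congrArg Subtype.val hab)
  have : FaithfulSMul ℤ_[2] (integralClosure ℤ_[2] M) :=
    (faithfulSMul_iff_algebraMap_injective _ _).2 hinj
  have : IsLocalHom (algebraMap ℤ_[2] (integralClosure ℤ_[2] M)) :=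
    Algebra.IsIntegral.isLocalHom _ _
  let k := IsLocalRing.ResidueField (integralClosure ℤ_[2] M)
  have : Finite (IsLocalRing.ResidueField ℤ_[2]) := inferInstance
  have : Algebra.IsAlgebraic (IsLocalRing.ResidueField ℤ_[2]) k := by
    constructor
    intro z
    obtain ⟨y, rfl⟩ := IsLocalRing.residue_surjective z
    have h1 : IsIntegral ℤ_[2] y := Algebra.IsIntegral.isIntegral y
    have h2 : IsIntegral ℤ_[2] (IsLocalRing.residue (integralClosure ℤ_[2] M) y) :=
      h1.map (IsScalarTower.toAlgHom ℤ_[2] (integralClosure ℤ_[2] M) k)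
    exact (h2.tower_top (A := IsLocalRing.ResidueField ℤ_[2])).isAlgebraic
  have : PerfectField k := Algebra.IsAlgebraic.perfectField (IsLocalRing.ResidueField ℤ_[2])
  have : CharP k 2 := by
    have : CharP (IsLocalRing.ResidueField ℤ_[2]) 2 :=
      charP_of_injective_ringHom (f := (PadicInt.residueField (p := 2)).symm.toRingHom)
        (PadicInt.residueField (p := 2)).symm.injective 2
    exact charP_of_injective_algebraMap (algebraMap (IsLocalRing.ResidueField ℤ_[2]) k).injective 2
  have : PerfectRing k 2 := inferInstance
  obtain ⟨y, hy⟩ := surjective_frobenius k 2 (IsLocalRing.residue _ x)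
  obtain ⟨y, rfl⟩ := IsLocalRing.residue_surjective y
  refine ⟨y, ?_⟩
  rw [← IsLocalRing.residue_eq_zero_iff, map_sub, map_mul, ← hy, frobenius_def, pow_two, sub_self]


/-- There is an integer `θ` of `K` with `θ - σ θ` a unit.

For `p` odd, the unit part `u` of any nonzero `x - σ x` satisfies `σ u = -u`, and `2 u` is a unit.
For `p = 2`, suppose that `x - σ x` lies in the maximal ideal for all integers `x`. As `x` is
congruent to a square `y²`, hence to the norm `y · σ y`, it equals this norm plus some `f u` with `f` in
the maximal ideal of `O_F` and `u` integral. So `x - σ x = f (u - σ u)`, and Nakayama's lemma forces the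
finitely generated module of all `x - σ x` to vanish, against `σ ≠ 1`. -/
theorem exists_theta (p : ℕ) [Fact p.Prime] {F : Type*} [Field F] [Algebra ℚ_[p] F]
    [FiniteDimensional ℚ_[p] F] [Algebra ℤ_[p] F] [IsScalarTower ℤ_[p] ℚ_[p] F]
    {K : Type*} [Field K] [Algebra F K] [Algebra ℚ_[p] K] [IsScalarTower ℚ_[p] F K]
    [Algebra ℤ_[p] K] [IsScalarTower ℤ_[p] ℚ_[p] K]
    (hquad : Module.finrank F K = 2)
    (hunram : ∀ y : K, y ≠ 0 → ∃ u z : K, u ∈ integralClosure ℤ_[p] K ∧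
      u⁻¹ ∈ integralClosure ℤ_[p] K ∧ z ∈ (algebraMap F K).range ∧ y = u * z)
    (σ : K ≃ₐ[F] K) (hσ : σ ≠ AlgEquiv.refl) :
    ∃ θ δ : K, IsIntegral ℤ_[p] θ ∧ IsIntegral ℤ_[p] δ ∧ (θ - σ θ) * δ = 1 := by
  have : FiniteDimensional F K := Module.finite_of_finrank_pos (by omega)
  have : FiniteDimensional ℚ_[p] K := Module.Finite.trans F K
  have : CharZero K := charZero_of_injective_algebraMap (algebraMap ℚ_[p] K).injective
  have : IsScalarTower ℤ_[p] F K := by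
    refine IsScalarTower.of_algebraMap_eq fun x => ?_
    rw [IsScalarTower.algebraMap_apply ℤ_[p] ℚ_[p] K, IsScalarTower.algebraMap_apply ℚ_[p] F K,
      ← IsScalarTower.algebraMap_apply ℤ_[p] ℚ_[p] F]
  have hσi : ∀ x : K, IsIntegral ℤ_[p] x → IsIntegral ℤ_[p] (σ x) := fun x hx =>
    hx.map (σ.toAlgHom.restrictScalars ℤ_[p])
  have hmove : ∃ x, σ x ≠ x := by
    by_contra! h
    exact hσ (AlgEquiv.ext h)
  by_cases hp : p = 2
  · subst hp
    by_contra! H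
    have := valRing 2 K
    have := valRing 2 F
    let A := integralClosure ℤ_[2] F
    let O := integralClosure ℤ_[2] K
    have hmem : ∀ x : O, ∀ hx : IsIntegral ℤ_[2] ((x : K) - σ x),
        (⟨(x : K) - σ x, hx⟩ : O) ∈ IsLocalRing.maximalIdeal O := by
      intro x hx hu
      obtain ⟨v, hv⟩ := hu.exists_right_inv
      exact H x v x.2 v.2 (congrArg Subtype.val hv)
    have hfin : Module.Finite ℤ_[2] O := IsIntegralClosure.finite ℤ_[2] ℚ_[2] K O
    obtain ⟨s, hs⟩ := (Module.Finite.iff_fg (N := Subalgebra.toSubmodule O)).1 hfin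
    let D : K →ₗ[F] K := LinearMap.id - σ.toLinearMap
    have hD : ∀ x, D x = x - σ x := fun x => rfl
    have hsO : ∀ x ∈ s, IsIntegral ℤ_[2] x := fun x hx => by
      have : x ∈ Subalgebra.toSubmodule O := hs ▸ Submodule.subset_span hx
      exact this
    -- `T` is the `O_F`-module generated by all `x - σ x`, for `x` an integer of `K`.
    let T : Submodule A K := Submodule.span A (D '' s)
    have hT : ∀ x, IsIntegral ℤ_[2] x → D x ∈ T := by
      intro x hx
      have hx' : x ∈ Submodule.span ℤ_[2] (s : Set K) := by rw [hs]; exact hx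
      have h1 : D x ∈ (Submodule.span ℤ_[2] (s : Set K)).map (D.restrictScalars ℤ_[2]) :=
        Submodule.mem_map_of_mem hx'
      rw [Submodule.map_span] at h1
      exact Submodule.span_le_restrictScalars ℤ_[2] A _ h1
    have hTm : T ≤ IsLocalRing.maximalIdeal A • T := by
      refine Submodule.span_le.2 ?_
      rintro _ ⟨x, hx, rfl⟩
      obtain ⟨y, hy⟩ := sqrt_res K ⟨x, hsO x hx⟩
      have hσy : IsIntegral ℤ_[2] (σ y) := hσi _ y.2
      -- `x - y * σ y` is `(x - y²) + y (y - σ y)`, a sum of two elements of the maximal ideal.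
      have hm : (⟨x, hsO x hx⟩ - y * y + y * ⟨(y : K) - σ y, y.2.sub hσy⟩ : O) ∈
          IsLocalRing.maximalIdeal O :=
        Ideal.add_mem _ hy (Ideal.mul_mem_left _ _ (hmem y _))
      obtain ⟨t, ht⟩ : ∃ t : O, t = ⟨x, hsO x hx⟩ - y * y + y * ⟨(y : K) - σ y, y.2.sub hσy⟩ :=
        ⟨_, rfl⟩
      rw [← ht] at hm
      have ht' : (t : K) = x - y * σ y := by
        rw [ht]; push_cast; ring
      have hDt : D x = (t : K) - σ t := by
        rw [hD, ht', map_sub, map_mul, invol hquad]; ring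
      by_cases ht0 : (t : K) = 0
      · rw [hDt, ht0, map_zero, sub_zero]; exact Submodule.zero_mem _
      obtain ⟨u, z, hu, hu', ⟨f, rfl⟩, htu⟩ := hunram t ht0
      have hu0 : u ≠ 0 := by rintro rfl; simp at htu; exact ht0 (congrArg Subtype.val htu)
      have hfz : (t : K) * u⁻¹ = algebraMap F K f := by rw [htu]; field_simp
      have hfi : IsIntegral ℤ_[2] f := by
        rw [← isIntegral_algHom_iff (IsScalarTower.toAlgHom ℤ_[2] F K) (algebraMap F K).injective]
        change IsIntegral ℤ_[2] (algebraMap F K f)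
        rw [← hfz]
        exact t.2.mul hu'
      have hfm : (⟨f, hfi⟩ : A) ∈ IsLocalRing.maximalIdeal A := by
        intro hun
        obtain ⟨v, hv⟩ := hun.exists_right_inv
        have hv' : f * (v : F) = 1 := congrArg Subtype.val hv
        have hvi : IsIntegral ℤ_[2] (algebraMap F K v) :=
          IsIntegral.map (IsScalarTower.toAlgHom ℤ_[2] F K) v.2
        apply hm
        refine IsUnit.of_mul_eq_one (⟨u⁻¹ * algebraMap F K v, hu'.mul hvi⟩ : O) ?_
        apply Subtype.ext
        change (t : K) * (u⁻¹ * algebraMap F K v) = 1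
        rw [← mul_assoc, hfz, ← map_mul, hv', map_one]
      have : D x = (⟨f, hfi⟩ : A) • D u := by
        change D x = f • D u
        rw [hDt, htu, hD, Algebra.smul_def, map_mul, AlgEquiv.commutes]; ring
      rw [this]
      exact Submodule.smul_mem_smul hfm (hT u hu)
    have hbot : T = ⊥ := Submodule.eq_bot_of_le_smul_of_le_jacobson_bot _ T
      (Submodule.fg_span (s.finite_toSet.image _)) hTm (IsLocalRing.maximalIdeal_le_jacobson _)
    obtain ⟨x, hx⟩ := hmove
    apply hx
    by_cases hx0 : x = 0
    · rw [hx0, map_zero]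
    obtain ⟨u, z, hu, -, ⟨f, rfl⟩, rfl⟩ := hunram x hx0
    have h1 := hT u hu
    rw [hbot, Submodule.mem_bot, hD, sub_eq_zero] at h1
    rw [map_mul, ← h1, AlgEquiv.commutes]
  · obtain ⟨x, hx⟩ := hmove
    obtain ⟨u, z, hu, hu', ⟨f, rfl⟩, huz⟩ := hunram (x - σ x) (sub_ne_zero.2 (Ne.symm hx))
    have hne : u * algebraMap F K f ≠ 0 := by rw [← huz]; exact sub_ne_zero.2 (Ne.symm hx)
    have h1 : σ u = - u := by
      have := congrArg σ huz
      rw [map_sub, invol hquad, map_mul, AlgEquiv.commutes] at this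
      apply mul_right_cancel₀ (right_ne_zero_of_mul hne)
      linear_combination - this - huz
    have h2 : IsUnit (2 : ℤ_[p]) := by
      rw [PadicInt.isUnit_iff]
      have := (PadicInt.norm_natCast_eq_one_iff (p := p) (n := 2)).2
        ((Nat.coprime_primes Fact.out Nat.prime_two).2 hp)
      simpa using this
    obtain ⟨v, hv⟩ := h2.exists_right_inv
    refine ⟨u, algebraMap ℤ_[p] K v * u⁻¹, hu, isIntegral_algebraMap.mul hu', ?_⟩
    have hv' := congrArg (algebraMap ℤ_[p] K) hv
    rw [map_mul, map_one, map_ofNat] at hv'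
    have hu0 := left_ne_zero_of_mul hne
    rw [h1]
    field_simp
    linear_combination hv'

/-! ### Ring homomorphisms out of `ℤ_p` -/

/-- Hensel's lemma: elements of `1 + p ℤ_p` have `n`-th roots for all `n` prime to `p`. -/
theorem exists_root_one_add (p : ℕ) [Fact p.Prime] (n : ℕ) (hn : p.Coprime n) (x : ℤ_[p]) :
    ∃ w : ℤ_[p], w ^ n = 1 + p * x := by
  have h := hensels_lemma (p := p) (F := (Polynomial.X ^ n - Polynomial.C (1 + p * x) :
    Polynomial ℤ_[p])) (a := 1)
  simp only [map_sub, map_pow, Polynomial.aeval_X, Polynomial.aeval_C, Polynomial.derivative_X_pow,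
    Polynomial.derivative_C, sub_zero, map_mul, one_pow, mul_one,
    map_natCast, Algebra.algebraMap_self, RingHom.id_apply, PadicInt.norm_natCast_eq_one_iff.2 hn]
    at h
  obtain ⟨w, hw, -⟩ := h (by
    rw [sub_add_cancel_left, norm_neg, norm_mul]
    have := PadicInt.norm_le_one x
    have h1 : ‖(p : ℤ_[p])‖ < 1 := PadicInt.norm_natCast_lt_one_iff.2 dvd_rfl
    have := norm_nonneg (p : ℤ_[p])
    nlinarith)
  exact ⟨w, sub_eq_zero.1 hw⟩

/-- Discreteness of the spectral norm: its `[M : ℚ_p]`-th power takes nonzero values in `p ^ ℤ`, so a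
value exceeding one is at least `p`, hence at least two. -/
theorem two_le_spectralNorm_pow (p : ℕ) [Fact p.Prime] (M : Type*) [Field M] [Algebra ℚ_[p] M]
    [FiniteDimensional ℚ_[p] M] (w : M) (hw : 1 < spectralMulAlgNorm ℚ_[p] M w) :
    2 ≤ spectralMulAlgNorm ℚ_[p] M w ^ Module.finrank ℚ_[p] M := by
  obtain ⟨m, hm⟩ := minpoly.degree_dvd (K := ℚ_[p]) (x := w) (Algebra.IsIntegral.isIntegral w)
  have hd := minpoly.natDegree_pos (A := ℚ_[p]) (Algebra.IsIntegral.isIntegral w)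
  have hD : 0 < Module.finrank ℚ_[p] M := Module.finrank_pos
  have hm0 : m ≠ 0 := by rintro rfl; omega
  have h1 : spectralMulAlgNorm ℚ_[p] M w ^ (minpoly ℚ_[p] w).natDegree =
      ‖(minpoly ℚ_[p] w).coeff 0‖ := by
    rw [spectralMulAlgNorm_def, spectralNorm.spectralNorm_eq_norm_coeff_zero_rpow, ← Real.rpow_natCast,
      ← Real.rpow_mul (norm_nonneg _), one_div, inv_mul_cancel₀ (by exact_mod_cast hd.ne'),
      Real.rpow_one]
  have h2 : 1 < ‖(minpoly ℚ_[p] w).coeff 0‖ := h1 ▸ one_lt_pow₀ hw hd.ne'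
  have h3 : 2 ≤ ‖(minpoly ℚ_[p] w).coeff 0‖ := by
    have hc : (minpoly ℚ_[p] w).coeff 0 ≠ 0 := by
      intro h; rw [h, norm_zero] at h2; linarith
    rw [Padic.norm_eq_zpow_neg_valuation hc] at h2 ⊢
    have hp : (2 : ℝ) ≤ p := by exact_mod_cast (Fact.out : p.Prime).two_le
    have h4 : 0 < -((minpoly ℚ_[p] w).coeff 0).valuation := by
      by_contra h
      have := zpow_le_one_of_nonpos₀ (a := (p : ℝ)) (by linarith) (not_lt.1 h)
      linarith
    calc (2 : ℝ) ≤ p := hp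
      _ = (p : ℝ) ^ (1 : ℤ) := (zpow_one _).symm
      _ ≤ _ := zpow_le_zpow_right₀ (by linarith) h4
  rw [hm, pow_mul, h1]
  exact h3.trans (le_self_pow₀ (by linarith) hm0)

/-- A ring homomorphism `ℤ_p → M`, not assumed continuous, has image in the unit ball: `1 + p x` is
an `n`-th power for arbitrarily large `n`, so by discreteness its image has norm at most one. Hence
the image of `x` has norm at most `p`, and applying this to all powers of `x` improves `p` to `1`. -/
theorem spectralNorm_hom_le_one (p : ℕ) [Fact p.Prime] (M : Type*) [Field M] [Algebra ℚ_[p] M]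
    [FiniteDimensional ℚ_[p] M] (φ : ℤ_[p] →+* M) (x : ℤ_[p]) :
    spectralMulAlgNorm ℚ_[p] M (φ x) ≤ 1 := by
  have hu : ∀ y : ℤ_[p], spectralMulAlgNorm ℚ_[p] M (1 + p * φ y) ≤ 1 := by
    intro y
    by_contra! hy
    obtain ⟨k, hk⟩ := pow_unbounded_of_one_lt
      (spectralMulAlgNorm ℚ_[p] M (1 + p * φ y) ^ Module.finrank ℚ_[p] M) one_lt_two
    obtain ⟨w, hw⟩ := exists_root_one_add p (p * k + 1) (by simp) y
    have hw' : φ w ^ (p * k + 1) = 1 + p * φ y := by rw [← map_pow, hw]; simp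
    rw [← hw', map_pow] at hy hk
    have h1 : 1 < spectralMulAlgNorm ℚ_[p] M (φ w) := by
      by_contra! h
      exact absurd (pow_le_one₀ (apply_nonneg _ _) h) (not_le.2 hy)
    have h2 := two_le_spectralNorm_pow p M (φ w) h1
    rw [pow_right_comm] at hk
    have h3 : (2 : ℝ) ^ k ≤ 2 ^ (p * k + 1) := by
      apply pow_le_pow_right₀ one_le_two
      have := (Fact.out : p.Prime).two_le
      nlinarith
    have h4 := pow_le_pow_left₀ zero_le_two h2 (p * k + 1)
    linarith
  have hp : ∀ y : ℤ_[p], spectralMulAlgNorm ℚ_[p] M (φ y) ≤ p := by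
    intro y
    have e : (p : M) * φ y = (1 + p * φ y) + -(1 + p * φ 0) := by simp
    have h1 := isNonarchimedean_spectralNorm (K := ℚ_[p]) (L := M) (1 + p * φ y) (-(1 + p * φ 0))
    rw [← e, ← spectralMulAlgNorm_def, ← spectralMulAlgNorm_def, ← spectralMulAlgNorm_def,
      map_neg_eq_map, map_mul] at h1
    have h2 := h1.trans (max_le (hu y) (hu 0))
    have h3 : spectralMulAlgNorm ℚ_[p] M (p : M) = (p : ℝ)⁻¹ := by
      rw [← map_natCast (algebraMap ℚ_[p] M), spectralMulAlgNorm_def, spectralNorm_extends,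
        Padic.norm_p]
    have hp0 : (0 : ℝ) < p := by exact_mod_cast (Fact.out : p.Prime).pos
    rw [h3, inv_mul_le_iff₀ hp0, mul_one] at h2
    exact h2
  by_contra! h
  obtain ⟨k, hk⟩ := pow_unbounded_of_one_lt (p : ℝ) h
  rw [← map_pow, ← map_pow] at hk
  exact absurd (hp (x ^ k)) (not_le.2 hk)

/-- Two ring homomorphisms from `ℤ_p` to a finite extension of `ℚ_p` agree: they agree on `ℕ`, and
their difference at `x = n + p ^ k y` is `p ^ k` times an element of norm at most one. -/
theorem hom_field_unique (p : ℕ) [Fact p.Prime] (M : Type*) [Field M] [Algebra ℚ_[p] M]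
    [FiniteDimensional ℚ_[p] M] (φ ψ : ℤ_[p] →+* M) : φ = ψ := by
  ext x
  rw [← sub_eq_zero]
  have hs : ∀ y, spectralMulAlgNorm ℚ_[p] M (φ y - ψ y) ≤ 1 := by
    intro y
    have h1 := isNonarchimedean_spectralNorm (K := ℚ_[p]) (L := M) (φ y) (-ψ y)
    rw [← sub_eq_add_neg, ← spectralMulAlgNorm_def, ← spectralMulAlgNorm_def,
      ← spectralMulAlgNorm_def, map_neg_eq_map] at h1
    exact h1.trans (max_le (spectralNorm_hom_le_one p M φ y) (spectralNorm_hom_le_one p M ψ y))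
  have h3 : spectralMulAlgNorm ℚ_[p] M (p : M) = (p : ℝ)⁻¹ := by
    rw [← map_natCast (algebraMap ℚ_[p] M), spectralMulAlgNorm_def, spectralNorm_extends,
      Padic.norm_p]
  have hk : ∀ k : ℕ, spectralMulAlgNorm ℚ_[p] M (φ x - ψ x) ≤ ((p : ℝ)⁻¹) ^ k := by
    intro k
    obtain ⟨y, hy⟩ := Ideal.mem_span_singleton'.1 (PadicInt.appr_spec k x)
    have hx : x = PadicInt.appr x k + y * p ^ k := by rw [hy]; ring
    have e : φ x - ψ x = p ^ k * (φ y - ψ y) := by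
      rw [hx]
      simp only [map_add, map_mul, map_pow, map_natCast]
      ring
    rw [e, map_mul, map_pow, h3]
    exact mul_le_of_le_one_right (by positivity) (hs y)
  have hp1 : (p : ℝ)⁻¹ < 1 := inv_lt_one_of_one_lt₀ (by
    exact_mod_cast (Fact.out : p.Prime).one_lt)
  have h0 : spectralMulAlgNorm ℚ_[p] M (φ x - ψ x) ≤ 0 :=
    ge_of_tendsto' (tendsto_pow_atTop_nhds_zero_of_lt_one (by positivity) hp1) hk
  exact (map_eq_zero_iff_eq_zero _).1 (le_antisymm h0 (apply_nonneg _ _))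

/-- There is only one ring homomorphism from `ℤ_p` to a finite reduced `ℚ_p`-algebra. Consequently any
`O_F`-algebra structure on `E` induces the standard `ℤ_p`-algebra structure. -/
theorem hom_unique (p : ℕ) [Fact p.Prime] (E : Type*) [CommRing E] [IsReduced E] [Algebra ℚ_[p] E]
    [FiniteDimensional ℚ_[p] E] (φ ψ : ℤ_[p] →+* E) : φ = ψ := by
  have : IsArtinianRing E := isArtinian_of_tower ℚ_[p] inferInstance
  ext x
  apply (IsArtinianRing.equivPi E).injective
  funext m
  let := Ideal.Quotient.field m.asIdeal
  have : FiniteDimensional ℚ_[p] (E ⧸ m.asIdeal) :=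
    Module.Finite.of_surjective (Ideal.Quotient.mkₐ ℚ_[p] m.asIdeal).toLinearMap
      Ideal.Quotient.mk_surjective
  rw [IsArtinianRing.equivPi_apply, IsArtinianRing.equivPi_apply]
  exact congrArg (fun f => f x) (hom_field_unique p (E ⧸ m.asIdeal)
    ((Ideal.Quotient.mk m.asIdeal).comp φ) ((Ideal.Quotient.mk m.asIdeal).comp ψ))

/-! ### The decomposition for a stable ring of integers -/

theorem adj_mul {F K : Type*} [Field F] [Field K] [Algebra F K] (σ : K ≃ₐ[F] K)
    (A B : Matrix (Fin 3) (Fin 3) K) :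
    ((A * B).map σ)ᵀ = (B.map σ)ᵀ * (A.map σ)ᵀ := by
  rw [← transpose_mul]
  congr 1
  exact Matrix.map_mul (f := (σ : K →+* K))

theorem isIntegral_mul_apply {R K : Type*} [CommRing R] [CommRing K] [Algebra R K]
    {A B : Matrix (Fin 3) (Fin 3) K} (hA : ∀ r s, IsIntegral R (A r s))
    (hB : ∀ r s, IsIntegral R (B r s)) (r s : Fin 3) : IsIntegral R ((A * B) r s) := by
  rw [mul_apply]
  exact IsIntegral.sum _ fun k _ => (hA r k).mul (hB k s)

/-- A matrix with integral entries is integral, by the Cayley–Hamilton theorem over the integral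
closure. -/
theorem isIntegral_matrix {R K : Type*} [CommRing R] [CommRing K] [Algebra R K]
    {A : Matrix (Fin 3) (Fin 3) K} (hA : ∀ r s, IsIntegral R (A r s)) : IsIntegral R A := by
  let A' : Matrix (Fin 3) (Fin 3) (integralClosure R K) := Matrix.of fun r s => ⟨A r s, hA r s⟩
  have h1 : IsIntegral R A' := isIntegral_trans A' (Matrix.isIntegral A')
  exact h1.map (integralClosure R K).val.mapMatrix

/-- The decomposition `g = i(l) k`, for a finite reduced algebra `L` with involution `τ` all of whose
integral elements act integrally on both lattices `O_K³` and `g O_K³`. -/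
theorem abstract_main (p : ℕ) [Fact p.Prime]
    {F : Type*} [Field F] {K : Type*} [Field K] [Algebra F K] [Algebra ℤ_[p] K]
    (σ : K ≃ₐ[F] K) (hσσ : ∀ x, σ (σ x) = x)
    (hσi : ∀ x : K, IsIntegral ℤ_[p] x → IsIntegral ℤ_[p] (σ x))
    {L : Type*} [CommRing L] [IsReduced L] [Algebra K L] [FiniteDimensional K L]
    [Algebra ℚ_[p] L] [FiniteDimensional ℚ_[p] L] [Algebra ℤ_[p] L] [IsScalarTower ℤ_[p] ℚ_[p] L]
    [IsScalarTower ℤ_[p] K L] (hdim : Module.finrank K L = 3)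
    (τ : L →ₐ[ℤ_[p]] L) (hττ : ∀ x, τ (τ x) = x)
    (i : L →ₐ[K] Matrix (Fin 3) (Fin 3) K) (hinj : Function.Injective i)
    (hherm : ∀ l, i (τ l) = ((i l).map σ)ᵀ)
    (g h : Matrix (Fin 3) (Fin 3) K) (hg : (g.map σ)ᵀ = h) (hgh : g * h = 1)
    (hint : ∀ x : L, IsIntegral ℤ_[p] x → ∀ r s, IsIntegral ℤ_[p] (i x r s))
    (hconj : ∀ x : L, IsIntegral ℤ_[p] x → ∀ r s, IsIntegral ℤ_[p] ((h * i x * g) r s)) :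
    ∃ (l : L) (k : Matrix (Fin 3) (Fin 3) K),
      IsUnit l ∧ τ l * l = 1 ∧ k * ((k.map σ)ᵀ) = 1 ∧ (∀ a b, IsIntegral ℤ_[p] (k a b)) ∧
      (∃ k' : Matrix (Fin 3) (Fin 3) K,
        (∀ a b, IsIntegral ℤ_[p] (k' a b)) ∧ k * k' = 1 ∧ k' * k = 1) ∧
      g = i l * k := by
  have hhg : h * g = 1 := mul_eq_one_comm.1 hgh
  have hh : (h.map σ)ᵀ = g := by
    rw [← hg]; ext r s; simp [hσσ]
  have hadj : ∀ {A : Matrix (Fin 3) (Fin 3) K}, (∀ r s, IsIntegral ℤ_[p] (A r s)) →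
      ∀ r s, IsIntegral ℤ_[p] ((A.map σ)ᵀ r s) := fun hA r s => hσi _ (hA s r)
  obtain ⟨v, hv⟩ := exists_cyclic hdim i hinj
  obtain ⟨b₁, b₁', c₁, d₁, hb₁, hc₁, hd₁, h1₁, h2₁⟩ :=
    exists_lattice_gen p i v hv 1 1 (one_mul 1)
  obtain ⟨b₂, b₂', c₂, d₂, hb₂, hc₂, hd₂, h1₂, h2₂⟩ := exists_lattice_gen p i v hv g h hgh
  have t₁ := transfer p i v (h₂ := h) hb₁ hc₁ hd₂ h1₁ h2₂ hconj
  have t₂ := transfer p i v (h₂ := 1) hb₂ hc₂ hd₁ h1₂ h2₁ (by simpa using hint)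
  -- `a` carries the generator of `O_K³` to that of `g O_K³`; `g⁻¹ i(a)` and `i(a⁻¹) g` are integral.
  obtain ⟨a, ha⟩ : ∃ a, a = b₂ * b₁' := ⟨_, rfl⟩
  obtain ⟨a', ha'⟩ : ∃ a', a' = b₁ * b₂' := ⟨_, rfl⟩
  have haa : a * a' = 1 := by
    rw [ha, ha']; linear_combination b₂ * b₂' * hb₁ + hb₂
  have hiaa : i a * i a' = 1 := by rw [← map_mul, haa, map_one]
  have hiaa' : i a' * i a = 1 := by rw [← map_mul, mul_comm, haa, map_one]
  rw [← ha, mul_one] at t₁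
  rw [← ha', one_mul] at t₂
  have hi : Function.Injective (i.restrictScalars ℤ_[p]) := hinj
  have hN : IsIntegral ℤ_[p] (a * τ a) := by
    rw [← isIntegral_algHom_iff _ hi]
    apply isIntegral_matrix
    -- Unitarity of `g` removes it from the product of `g⁻¹ i(a)` with its adjoint.
    have e : i (a * τ a) = ((h * i a).map σ)ᵀ * (h * i a) := by
      rw [adj_mul, hh, mul_assoc, ← mul_assoc g, hgh, one_mul, ← hherm, ← map_mul, mul_comm]
    change ∀ r s, IsIntegral ℤ_[p] (i (a * τ a) r s)
    rw [e]
    exact isIntegral_mul_apply (hadj t₁) t₁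
  have hN' : IsIntegral ℤ_[p] (a' * τ a') := by
    rw [← isIntegral_algHom_iff _ hi]
    apply isIntegral_matrix
    have e : i (a' * τ a') = (i a' * g) * ((i a' * g).map σ)ᵀ := by
      rw [adj_mul, hg, mul_assoc, ← mul_assoc g, hgh, one_mul, ← hherm, ← map_mul]
    change ∀ r s, IsIntegral ℤ_[p] (i (a' * τ a') r s)
    rw [e]
    exact isIntegral_mul_apply t₂ (hadj t₂)
  obtain ⟨l, hl, hu, hu'⟩ := norm_one_part p τ hττ haa hN hN'
  have hil : i l * i (τ l) = 1 := by rw [← map_mul, mul_comm, hl, map_one]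
  have hil' : i (τ l) * i l = 1 := by rw [← map_mul, hl, map_one]
  refine ⟨l, i (τ l) * g, IsUnit.of_mul_eq_one_right _ hl, hl, ?_, ?_, ⟨h * i l, ?_, ?_, ?_⟩, ?_⟩
  · rw [adj_mul, hg, ← hherm, hττ, mul_assoc, ← mul_assoc g, hgh, one_mul, hil']
  · have e : i (τ l) * g = i (τ l * a) * (i a' * g) := by
      rw [map_mul, mul_assoc, ← mul_assoc (i a), hiaa, one_mul]
    rw [e]
    exact isIntegral_mul_apply (hint _ hu) t₂
  · have e : h * i l = (h * i a) * i (l * a') := by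
      rw [mul_comm l, map_mul, mul_assoc, ← mul_assoc (i a), hiaa, one_mul]
    rw [e]
    exact isIntegral_mul_apply t₁ (hint _ hu')
  · rw [mul_assoc, ← mul_assoc g, hgh, one_mul, hil']
  · rw [mul_assoc, ← mul_assoc (i l), hil, one_mul, hhg]
  · rw [← mul_assoc, hil, one_mul]

/-! ### Integers of `K ⊗ E` -/

/-- A finite reduced algebra over a field of characteristic zero is étale, hence stays reduced under
extension of the base field. -/
theorem isReduced_tensor {F K E : Type*} [Field F] [CharZero F] [Field K] [Algebra F K]
    [FiniteDimensional F K] [CommRing E] [Algebra F E] [FiniteDimensional F E] [IsReduced E] :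
    IsReduced (K ⊗[F] E) := by
  have : IsArtinianRing E := isArtinian_of_tower F inferInstance
  have : Algebra.FormallyEtale F E := by
    let _ : ∀ m : MaximalSpectrum E, Field (E ⧸ m.asIdeal) := fun m =>
      Ideal.Quotient.field m.asIdeal
    rw [Algebra.FormallyEtale.iff_of_equiv ((IsArtinianRing.equivPi E).restrictScalars F),
      Algebra.FormallyEtale.pi_iff]
    intro m
    have : FiniteDimensional F (E ⧸ m.asIdeal) :=
      Module.Finite.of_surjective (Ideal.Quotient.mkₐ F m.asIdeal).toLinearMap
        Ideal.Quotient.mk_surjective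
    exact Algebra.FormallyEtale.of_isSeparable F (E ⧸ m.asIdeal)
  exact Algebra.FormallyUnramified.isReduced_of_field K (K ⊗[F] E)

/-- Integrality of `1 ⊗ e` over `R` descends to `e`. The structure of `E` as an algebra over the integral
closure of `R` in `F` only enters through its restriction to `R`, which `hc` prescribes. -/
theorem isIntegral_descend {R F K E : Type*} [CommRing R] [Field F] [Algebra R F] [Field K]
    [Algebra F K] [Algebra R K] [IsScalarTower R F K] [CommRing E] [Algebra F E]
    [Algebra (integralClosure R F) E]
    (hc : ∀ r : R, algebraMap (integralClosure R F) E (algebraMap R (integralClosure R F) r) =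
      algebraMap F E (algebraMap R F r))
    (e : E) (he : IsIntegral R ((1 : K) ⊗ₜ[F] e)) :
    e ∈ integralClosure (integralClosure R F) E := by
  obtain ⟨q, hq, hqe⟩ := he
  refine ⟨q.map (algebraMap R (integralClosure R F)), hq.map _, ?_⟩
  rw [Polynomial.eval₂_map]
  have hinj : Function.Injective (Algebra.TensorProduct.includeRight : E →ₐ[F] K ⊗[F] E) :=
    Algebra.TensorProduct.includeRight_injective (algebraMap F K).injective
  apply hinj
  rw [map_zero, ← hqe]
  change (Algebra.TensorProduct.includeRight : E →ₐ[F] K ⊗[F] E).toRingHom _ = _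
  rw [Polynomial.hom_eval₂]
  congr 1
  ext r
  change (1 : K) ⊗ₜ[F] (algebraMap (integralClosure R F) E (algebraMap R (integralClosure R F) r)) =
    algebraMap R K r ⊗ₜ[F] (1 : E)
  rw [hc, IsScalarTower.algebraMap_apply R F K, Algebra.algebraMap_eq_smul_one, Algebra.algebraMap_eq_smul_one (A := K),
    TensorProduct.smul_tmul]

/-- `1` and `θ` span `K ⊗ E` over `E`: for `k ∈ K` the coordinate of `θ` is
`(k - σ k) / (θ - σ θ)`. -/
theorem exists_coords {F K E : Type*} [Field F] [Field K] [Algebra F K] [CommRing E] [Algebra F E]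
    (hquad : Module.finrank F K = 2) (σ : K ≃ₐ[F] K) (hσ : σ ≠ AlgEquiv.refl)
    {θ δ : K} (hδ : (θ - σ θ) * δ = 1) (x : K ⊗[F] E) :
    ∃ e₁ e₂ : E, x = 1 ⊗ₜ[F] e₁ + θ ⊗ₜ[F] e₂ := by
  induction x with
  | zero => exact ⟨0, 0, by simp⟩
  | add x y hx hy =>
    obtain ⟨a, b, rfl⟩ := hx
    obtain ⟨c, d, rfl⟩ := hy
    refine ⟨a + c, b + d, ?_⟩
    rw [TensorProduct.tmul_add, TensorProduct.tmul_add]; abel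
  | tmul k e =>
    have hσδ : σ δ = - δ := by
      have := congrArg σ hδ
      rw [map_mul, map_sub, invol hquad, map_one] at this
      linear_combination - δ * this - σ δ * hδ
    obtain ⟨f₂, hf₂⟩ := fixed hquad σ hσ ((k - σ k) * δ) (by
      rw [map_mul, map_sub, invol hquad, hσδ]; ring)
    obtain ⟨f₁, hf₁⟩ := fixed hquad σ hσ (k - (k - σ k) * δ * θ) (by
      rw [map_sub, map_mul, map_mul, map_sub, invol hquad, hσδ]
      linear_combination (k - σ k) * hδ)
    refine ⟨f₁ • e, f₂ • e, ?_⟩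
    rw [← TensorProduct.smul_tmul, ← TensorProduct.smul_tmul, ← TensorProduct.add_tmul,
      Algebra.smul_def, Algebra.smul_def]
    change _ = ((algebraMap F K) f₁ * 1 + (algebraMap F K) f₂ * θ) ⊗ₜ[F] e
    congr 1
    change (algebraMap F K) f₂ = _ at hf₂
    change (algebraMap F K) f₁ = _ at hf₁
    rw [hf₁, hf₂]; ring

/-- When `θ - σ θ` is a unit, `O_L = O_E + θ O_E` for `L = K ⊗ E`: the coordinate `e₂` of `x` is
`(x - τ x) / (θ - σ θ)`. -/
theorem integral_coords {R F K E : Type*} [CommRing R] [Field F] [Algebra R F] [Field K]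
    [Algebra F K] [Algebra R K] [IsScalarTower R F K] [CommRing E] [Algebra F E]
    [Algebra (integralClosure R F) E]
    (hc : ∀ r : R, algebraMap (integralClosure R F) E (algebraMap R (integralClosure R F) r) =
      algebraMap F E (algebraMap R F r))
    (hquad : Module.finrank F K = 2) (σ : K ≃ₐ[F] K) (hσ : σ ≠ AlgEquiv.refl)
    {θ δ : K} (hθ : IsIntegral R θ) (hδi : IsIntegral R δ) (hδ : (θ - σ θ) * δ = 1)
    (τ : K ⊗[F] E →ₐ[R] K ⊗[F] E) (hτ : ∀ k e, τ (k ⊗ₜ[F] e) = σ k ⊗ₜ[F] e)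
    (x : K ⊗[F] E) (hx : IsIntegral R x) :
    ∃ e₁ ∈ integralClosure (integralClosure R F) E,
      ∃ e₂ ∈ integralClosure (integralClosure R F) E, x = 1 ⊗ₜ[F] e₁ + θ • (1 ⊗ₜ[F] e₂) := by
  obtain ⟨e₁, e₂, rfl⟩ := exists_coords (E := E) hquad σ hσ hδ x
  have hs : ∀ k : K, IsIntegral R k → IsIntegral R (k ⊗ₜ[F] (1 : E)) := fun k hk =>
    hk.map (IsScalarTower.toAlgHom R K (K ⊗[F] E))
  have h2 : IsIntegral R ((1 : K) ⊗ₜ[F] e₂) := by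
    have := (hs δ hδi).mul (hx.sub (hx.map τ))
    rw [map_add, hτ, hτ, map_one, add_sub_add_left_eq_sub, ← TensorProduct.sub_tmul,
      Algebra.TensorProduct.tmul_mul_tmul, mul_comm, hδ, one_mul] at this
    exact this
  have h1 : IsIntegral R ((1 : K) ⊗ₜ[F] e₁) := by
    have := hx.sub ((hs θ hθ).mul h2)
    rw [Algebra.TensorProduct.tmul_mul_tmul, mul_one, one_mul, add_sub_cancel_right] at this
    exact this
  refine ⟨e₁, isIntegral_descend hc e₁ h1, e₂, isIntegral_descend hc e₂ h2, ?_⟩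
  rw [TensorProduct.smul_tmul', smul_eq_mul, mul_one]

/-- Let `F` be a p-adic field with ring of integers `O_F = integralClosure ℤ_[p] F`, and let
`K` be an unramified quadratic field extension of `F` with ring of integers
`O_K = integralClosure ℤ_[p] K` and nontrivial `F`-automorphism `σ` (extended entrywise
to matrices).  Unramifiedness of the (quadratic) extension `K/F` is encoded by the
equality of value groups: every nonzero element of `K` is a unit of `O_K` times an
element of `F`.  Set `U₃(F) = {g ∈ GL₃(K) : g·ᵗḡ = 1}`,
`U₃(O_F) = U₃(F) ∩ GL₃(O_K)` and `J(O_F) = {x ∈ M₃(O_K) : ᵗx̄ = x}`.  Let `E` be a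
cubic étale `F`-algebra, `O_E` the integral closure of `O_F` in `E`, `L := K ⊗_F E`
with involution induced by `σ ⊗ id_E`, and `L¹ = {l ∈ L^× : l̄·l = 1}`.  Let
`i : L → M₃(K)` be an injective `K`-algebra homomorphism with `i(l̄) = ᵗ(i(l))̄` and
`i(x) ∈ J(O_F)` for all `x ∈ O_E`.  If `g ∈ U₃(F)` satisfies `g⁻¹·i(x)·g ∈ J(O_F)` for
every `x ∈ O_E`, then `g ∈ i(L¹)·U₃(O_F)`. -/
theorem stmt_1 (p : ℕ) [Fact p.Prime]
    {F : Type*} [Field F] [Algebra ℚ_[p] F] [FiniteDimensional ℚ_[p] F]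
    [Algebra ℤ_[p] F] [IsScalarTower ℤ_[p] ℚ_[p] F]
    {K : Type*} [Field K] [Algebra F K] [Algebra ℚ_[p] K] [IsScalarTower ℚ_[p] F K]
    [Algebra ℤ_[p] K] [IsScalarTower ℤ_[p] ℚ_[p] K]
    (hquad : Module.finrank F K = 2)
    -- `K/F` is unramified: the value groups agree, i.e. every nonzero element of `K`
    -- is a unit of `O_K` times an element of `F`.
    (hunram : ∀ y : K, y ≠ 0 → ∃ u z : K, u ∈ integralClosure ℤ_[p] K ∧
      u⁻¹ ∈ integralClosure ℤ_[p] K ∧ z ∈ (algebraMap F K).range ∧ y = u * z)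
    (σ : K ≃ₐ[F] K) (hσ : σ ≠ AlgEquiv.refl)
    {E : Type*} [CommRing E] [Algebra F E] [IsReduced E]
    (hdim : Module.finrank F E = 3)
    [Algebra (integralClosure ℤ_[p] F) E] [IsScalarTower (integralClosure ℤ_[p] F) F E]
    (i : TensorProduct F K E →ₐ[K] Matrix (Fin 3) (Fin 3) K)
    (hinj : Function.Injective i)
    (hherm : ∀ l : TensorProduct F K E,
      i (Algebra.TensorProduct.map σ.toAlgHom (AlgHom.id F E) l) = ((i l).map σ)ᵀ)
    (hint : ∀ x ∈ integralClosure (integralClosure ℤ_[p] F) E,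
      (((i ((1 : K) ⊗ₜ[F] x)).map σ)ᵀ = i ((1 : K) ⊗ₜ[F] x)) ∧
      ∀ a b, i ((1 : K) ⊗ₜ[F] x) a b ∈ integralClosure ℤ_[p] K)
    (g : Matrix (Fin 3) (Fin 3) K)
    (hgu : g * ((g.map σ)ᵀ) = 1)
    (hconj : ∀ x ∈ integralClosure (integralClosure ℤ_[p] F) E,
      (((g⁻¹ * i ((1 : K) ⊗ₜ[F] x) * g).map σ)ᵀ = g⁻¹ * i ((1 : K) ⊗ₜ[F] x) * g) ∧
      ∀ a b, (g⁻¹ * i ((1 : K) ⊗ₜ[F] x) * g) a b ∈ integralClosure ℤ_[p] K) :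
    ∃ (l : TensorProduct F K E) (k : Matrix (Fin 3) (Fin 3) K),
      IsUnit l ∧
      Algebra.TensorProduct.map σ.toAlgHom (AlgHom.id F E) l * l = 1 ∧
      k * ((k.map σ)ᵀ) = 1 ∧
      (∀ a b, k a b ∈ integralClosure ℤ_[p] K) ∧
      (∃ k' : Matrix (Fin 3) (Fin 3) K,
        (∀ a b, k' a b ∈ integralClosure ℤ_[p] K) ∧ k * k' = 1 ∧ k' * k = 1) ∧
      g = i l * k := by
  have : FiniteDimensional F K := Module.finite_of_finrank_pos (by omega)
  have : FiniteDimensional F E := Module.finite_of_finrank_pos (by omega)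
  have : FiniteDimensional ℚ_[p] K := Module.Finite.trans F K
  have : CharZero F := charZero_of_injective_algebraMap (algebraMap ℚ_[p] F).injective
  have : IsScalarTower ℤ_[p] F K := by
    refine IsScalarTower.of_algebraMap_eq fun x => ?_
    rw [IsScalarTower.algebraMap_apply ℤ_[p] ℚ_[p] K, IsScalarTower.algebraMap_apply ℚ_[p] F K,
      ← IsScalarTower.algebraMap_apply ℤ_[p] ℚ_[p] F]
  have : IsReduced (K ⊗[F] E) := isReduced_tensor
  have : FiniteDimensional ℚ_[p] (K ⊗[F] E) := Module.Finite.trans K _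
  have : IsScalarTower ℤ_[p] ℚ_[p] (K ⊗[F] E) := by
    refine IsScalarTower.of_algebraMap_eq fun x => ?_
    rw [IsScalarTower.algebraMap_apply ℤ_[p] K (K ⊗[F] E),
      IsScalarTower.algebraMap_apply ℚ_[p] K (K ⊗[F] E),
      ← IsScalarTower.algebraMap_apply ℤ_[p] ℚ_[p] K]
  obtain ⟨θ, δ, hθ, hδi, hδ⟩ := exists_theta p hquad hunram σ hσ
  let τ : K ⊗[F] E →ₐ[ℤ_[p]] K ⊗[F] E :=
    { Algebra.TensorProduct.map σ.toAlgHom (AlgHom.id F E) with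
      commutes' := fun r => by
        change Algebra.TensorProduct.map σ.toAlgHom (AlgHom.id F E)
          ((algebraMap ℤ_[p] K r) ⊗ₜ[F] (1 : E)) = (algebraMap ℤ_[p] K r) ⊗ₜ[F] (1 : E)
        rw [Algebra.TensorProduct.map_tmul, IsScalarTower.algebraMap_apply ℤ_[p] F K]
        change σ _ ⊗ₜ[F] _ = _
        rw [AlgEquiv.commutes]; rfl }
  have hτ : ∀ k e, τ (k ⊗ₜ[F] e) = σ k ⊗ₜ[F] e := fun k e => rfl
  have hττ : ∀ x, τ (τ x) = x := by
    intro x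
    induction x with
    | zero => simp
    | add x y hx hy => rw [map_add, map_add, hx, hy]
    | tmul k e => rw [hτ, hτ, invol hquad]
  have hinv : g⁻¹ = (g.map σ)ᵀ := Matrix.inv_eq_right_inv hgu
  -- The two `ℤ_p`-algebra structures on `E`, through `O_F` and through `F`, coincide.
  have hc : ∀ r : ℤ_[p], algebraMap (integralClosure ℤ_[p] F) E
      (algebraMap ℤ_[p] (integralClosure ℤ_[p] F) r) = algebraMap F E (algebraMap ℤ_[p] F r) := by
    let _ : Algebra ℚ_[p] E := ((algebraMap F E).comp (algebraMap ℚ_[p] F)).toAlgebra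
    have : IsScalarTower ℚ_[p] F E := IsScalarTower.of_algebraMap_eq fun _ => rfl
    have : FiniteDimensional ℚ_[p] E := Module.Finite.trans F E
    exact fun r => congrArg (fun f => f r) (hom_unique p E
      ((algebraMap (integralClosure ℤ_[p] F) E).comp (algebraMap ℤ_[p] (integralClosure ℤ_[p] F)))
      ((algebraMap F E).comp (algebraMap ℤ_[p] F)))
  have hcoords := integral_coords hc hquad σ hσ hθ hδi hδ τ hτ
  refine abstract_main p σ (invol hquad σ) (fun x hx => hx.map (σ.toAlgHom.restrictScalars ℤ_[p]))
    (by rw [Module.finrank_baseChange, hdim]) τ hττ i hinj hherm g _ rfl hgu ?_ ?_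
  · intro x hx r s
    obtain ⟨e₁, he₁, e₂, he₂, rfl⟩ := hcoords x hx
    rw [map_add, map_smul]
    exact IsIntegral.add ((hint e₁ he₁).2 r s) (hθ.mul ((hint e₂ he₂).2 r s))
  · intro x hx r s
    obtain ⟨e₁, he₁, e₂, he₂, rfl⟩ := hcoords x hx
    rw [← hinv, map_add, map_smul, mul_add, add_mul, mul_smul_comm, smul_mul_assoc]
    exact IsIntegral.add ((hconj e₁ he₁).2 r s) (hθ.mul ((hconj e₂ he₂).2 r s))
end

section
/- Let R be a commutative ring and (a,b,c,d) ∈ R⁴. On the free R-module A := R·1 ⊕ R·α ⊕ R·β there is a unique structure of a commutative, associative, unital R-algebra with unit 1 satisfying α² = −ac + bα − aβ, β² = −bd + dα − cβ, and αβ = −ad; in particular, (α,β) is a good basis of the resulting cubic R-algebra A. -/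
/-!
Existence: the table extends bilinearly to an explicit multiplication in coordinates, `cubicMul`.
Associativity is then an identity of polynomials in `a, b, c, d` and the coordinates. On the basis
it comes down to `(α²)β = α(αβ)` and `α(β²) = (αβ)β`: for instance
`(α²)β = -acβ - abd - a(-bd + dα - cβ) = -adα`, where the constant terms of the table are exactly
what makes the other contributions cancel.

Uniqueness: a bilinear map is determined by its values on pairs of basis vectors; the unit law,
the three relations and commutativity prescribe all nine of them.
-/

/-- The `i`-th standard basis vector of `Fin 3 → R`; `e 0` plays the role of `1`,
`e 1` of `α`, and `e 2` of `β`. -/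
def stdVec (R : Type*) [CommRing R] (i : Fin 3) : Fin 3 → R := Pi.single i 1

/-- The multiplication on `R·1 ⊕ R·α ⊕ R·β` determined by `α² = -ac + bα - aβ`,
`β² = -bd + dα - cβ`, `αβ = -ad`, written out in coordinates with respect to `(1, α, β)`. -/
def cubicMul {R : Type*} [CommRing R] (a b c d : R) :
    (Fin 3 → R) →ₗ[R] (Fin 3 → R) →ₗ[R] (Fin 3 → R) :=
  LinearMap.mk₂ R
    (fun x y =>
      ![x 0 * y 0 - a * c * (x 1 * y 1) - b * d * (x 2 * y 2) - a * d * (x 1 * y 2 + x 2 * y 1),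
        x 0 * y 1 + x 1 * y 0 + b * (x 1 * y 1) + d * (x 2 * y 2),
        x 0 * y 2 + x 2 * y 0 - a * (x 1 * y 1) - c * (x 2 * y 2)])
    (by intro x x' y; ext i; fin_cases i <;> simp <;> ring)
    (by intro r x y; ext i; fin_cases i <;> simp <;> ring)
    (by intro x y y'; ext i; fin_cases i <;> simp <;> ring)
    (by intro r x y; ext i; fin_cases i <;> simp <;> ring)

/-- Let `R` be a commutative ring and `(a,b,c,d) ∈ R⁴`.  On the free `R`-module
`A := R·1 ⊕ R·α ⊕ R·β` (realized as `Fin 3 → R`, with `1 = e₀`, `α = e₁`, `β = e₂`)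
there is a unique structure of commutative, associative, unital `R`-algebra with unit
`1 = e₀` satisfying `α² = −ac + bα − aβ`, `β² = −bd + dα − cβ`, `αβ = −ad`.  An
`R`-algebra structure on the `R`-module `A` is encoded by its `R`-bilinear
multiplication map `μ`.  (In particular `(α, β)` is then a good basis of the resulting
cubic `R`-algebra: `(1, α, β)` is an `R`-basis by construction and the third relation
says `αβ = −ad ∈ R·1`.) -/
theorem stmt_6 {R : Type*} [CommRing R] (a b c d : R) :
    ∃! μ : (Fin 3 → R) →ₗ[R] (Fin 3 → R) →ₗ[R] (Fin 3 → R),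
      (∀ x y, μ x y = μ y x) ∧
      (∀ x y z, μ (μ x y) z = μ x (μ y z)) ∧
      (∀ x, μ (stdVec R 0) x = x) ∧
      μ (stdVec R 1) (stdVec R 1) =
        (-(a * c)) • stdVec R 0 + b • stdVec R 1 - a • stdVec R 2 ∧
      μ (stdVec R 2) (stdVec R 2) =
        (-(b * d)) • stdVec R 0 + d • stdVec R 1 - c • stdVec R 2 ∧
      μ (stdVec R 1) (stdVec R 2) = (-(a * d)) • stdVec R 0 := by
  refine ⟨cubicMul a b c d, ⟨?_, ?_, ?_, ?_, ?_, ?_⟩, ?_⟩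
  · intro x y; ext i; fin_cases i <;> simp [cubicMul] <;> ring
  · intro x y z; ext i; fin_cases i <;> simp [cubicMul] <;> ring
  · intro x; ext i; fin_cases i <;> simp [cubicMul, stdVec]
  · ext i; fin_cases i <;> simp [cubicMul, stdVec]
  · ext i; fin_cases i <;> simp [cubicMul, stdVec]
  · ext i; fin_cases i <;> simp [cubicMul, stdVec]
  · rintro μ ⟨hcomm, -, hone, h11, h22, h12⟩
    have h10 := (hcomm (stdVec R 1) (stdVec R 0)).trans (hone _)
    have h20 := (hcomm (stdVec R 2) (stdVec R 0)).trans (hone _)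
    have h21 := (hcomm (stdVec R 2) (stdVec R 1)).trans h12
    refine LinearMap.ext_basis (Pi.basisFun R (Fin 3)) (Pi.basisFun R (Fin 3)) fun i j => ?_
    rw [Pi.basisFun_apply, Pi.basisFun_apply]
    change μ (stdVec R i) (stdVec R j) = cubicMul a b c d (stdVec R i) (stdVec R j)
    fin_cases i <;> fin_cases j <;>
      simp only [Fin.zero_eta, Fin.mk_one, Fin.reduceFinMk, hone, h10, h20, h11, h12, h21, h22] <;>
      ext k <;> fin_cases k <;> simp [cubicMul, stdVec]
end
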